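/- arXiv:1303.3296 — 7 statements merged into one kernel-verified Lean document; each statement's English description precedes it below -/
import Mathlib

section
/- Classification of central extensions of the asymptotic symmetry algebra of the generalized Brown-Henneaux boundary conditions: Let K⁺, K⁻ : ℤ×ℤ → ℂ be antisymmetric, K^{+-} : ℤ×ℤ → ℂ, V⁺, V⁻ : ℤ×ℤ → ℂ, V^{+-}, V^{-+} : ℤ×ℤ → ℂ, W⁺, W⁻ : ℤ×ℤ → ℂ antisymmetric, W^{+-} : ℤ×ℤ → ℂ, X⁺, X⁻ : ℤ → ℂ and Y⁺, Y⁻ : ℤ → ℂ. Suppose that for each chirality σ ∈ {+,−} and all m, n, p ∈ ℤ: (1) (m−n)Kσ(m+n,p) + (n−p)Kσ(n+p,m) + (p−m)Kσ(p+m,n) = 0; (2) (m−n)K^{+-}(m+n,p) = 0; (3) (m−n)Vσ(m+n,p) + p(Vσ(m,n+p) − Vσ(n,m+p)) = 0; (4) (m−n)V^{σ,−σ}(m+n,p) = 0; (5) (m−n)Xσ(m+n) − (i/2)Vσ(m,n) + (i/2)Vσ(n,m) = 0; (6) −n·Wσ(m+n,p) + p·Wσ(m+p,n) = 0; (7) −n·W^{+-}(m+n,p)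 = 0; (8) −n·Yσ(m+n) − (i/2)Wσ(m,n) = 0; together with the normalizations Kσ(0,m) = 0 for all m, Kσ(1,−1) = 0, Vσ(0,n) = 0 for all n ≠ 0, X⁺(0) + X⁻(0) = 0, and Y⁺(0) = Y⁻(0). Then there exist complex numbers c⁺, c⁻, d⁺, d⁻, d₀, k such that for all m, n ∈ ℤ: Kσ(m,n) = (cσ/12)(m³−m)·δ_{m+n,0}; K^{+-}(m,n) = 0; Vσ(m,n) = (dσ·m² − σ·i·d₀·m(m+2))·δ_{m+n,0}; V^{σ,−σ}(m,n) = 0; Wσ(m,n) = k·m·δ_{m+n,0}; W^{+-}(m,n) = 0; Xσ(m) = σ·d₀·δ_{m,0}; Yσ(m) = (i/2)·k·δ_{m,0} (here σ is interpreted as ±1 in the formulas). -/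
/-- The sign of a chirality: `+` is `true` (interpreted as `1`), `-` is `false`
(interpreted as `-1`). -/
noncomputable def sgn (σ : Bool) : ℂ := if σ then 1 else -1

/-!
The normalizations make `K` and `V` vanish off the line `m + n = 0`, and on that line the Jacobi
identities say that `m ↦ V m (-m)` and `m ↦ K m (-m)` are one-cocycles of the Witt algebra with
values in the tensor densities of weight `1` and `2`. Such a cocycle is determined by its values at
`1` and `2`, so it is a combination of `m, m ^ 2` in weight `1` and of `m, m ^ 3` in weight `2`.
Finally `X` is read off from the odd part
of `V`, and `W` from `Y`, through the brackets with `q`.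
-/

variable {F : Type*} [Field F]

/-- The map `L_m ↦ f m • e_m` is a one-cocycle of the Witt algebra with values in the tensor
densities of weight `w`, on which the action is `L_m • e_n = -(n + w * m) • e_(m + n)`. -/
def IsDensityCocycle (w : F) (f : ℤ → F) : Prop :=
  ∀ m n : ℤ, ((m : F) - n) * f (m + n) = (m + w * n) * f m - (w * m + n) * f n

/-- The map `(L_m, L_n) ↦ K m n` is a two-cocycle of the Witt algebra with trivial coefficients. -/
structure IsWittCocycle (K : ℤ → ℤ → F) : Prop where
  antisymm : ∀ m n : ℤ, K m n = -K n m
  jacobi : ∀ m n p : ℤ, ((m : F) - n) * K (m + n) p + ((n : F) - p) * K (n + p) m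
    + ((p : F) - m) * K (p + m) n = 0

/-- The map `(L_m, P_n) ↦ V m n` satisfies the `(L, L, P)` Jacobi identity of the semidirect product
of the Witt algebra with a `U(1)` current algebra. -/
def IsWittCurrentCocycle (V : ℤ → ℤ → F) : Prop :=
  ∀ m n p : ℤ, ((m : F) - n) * V (m + n) p + (p : F) * (V m (n + p) - V n (m + p)) = 0

theorem eq_mul_ite_of_antidiagonal {f : ℤ → ℤ → F} {g : ℤ → F}
    (hoff : ∀ m n, m + n ≠ 0 → f m n = 0) (hdiag : ∀ m, f m (-m) = g m) (m n : ℤ) :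
    f m n = g m * (if m + n = 0 then 1 else 0) := by
  split_ifs with hmn
  · rw [mul_one, ← hdiag, eq_neg_of_add_eq_zero_right hmn]
  · rw [mul_zero, hoff m n hmn]

namespace IsDensityCocycle

variable {w : F} {f g : ℤ → F}

theorem sub (hf : IsDensityCocycle w f) (hg : IsDensityCocycle w g) :
    IsDensityCocycle w fun m => f m - g m := fun m n => by
  linear_combination hf m n - hg m n

theorem comp_neg (hf : IsDensityCocycle w f) : IsDensityCocycle w fun m => f (-m) := by
  intro m n
  have reflected := hf (-m) (-n)
  rw [← neg_add] at reflected
  push_cast at reflected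
  linear_combination -reflected

theorem map_zero (hf : IsDensityCocycle w f) (hw : w ≠ 0) : f 0 = 0 := by
  have h := hf 1 0
  simp only [add_zero, Int.cast_one, Int.cast_zero] at h
  exact (mul_eq_zero.mp (show w * f 0 = 0 by linear_combination h)).resolve_left hw

end IsDensityCocycle

theorem IsWittCurrentCocycle.isDensityCocycle_one {V : ℤ → ℤ → F} (hV : IsWittCurrentCocycle V) :
    IsDensityCocycle 1 fun m => V m (-m) := by
  intro m n
  have jac := hV m n (-(m + n))
  rw [show n + -(m + n) = -m by ring, show m + -(m + n) = -n by ring] at jac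
  push_cast at jac
  linear_combination jac

theorem IsWittCocycle.isDensityCocycle_two {K : ℤ → ℤ → F} (hK : IsWittCocycle K) :
    IsDensityCocycle 2 fun m => K m (-m) := by
  intro m n
  have jac := hK.jacobi m n (-(m + n))
  rw [show n + -(m + n) = -m by ring, show -(m + n) + m = -n by ring,
    hK.antisymm (-m) m, hK.antisymm (-n) n] at jac
  push_cast at jac
  linear_combination jac

variable [CharZero F]

theorem eq_zero_of_sub_mul_add_eq_zero {f : ℤ → F} (h : ∀ m n : ℤ, ((m : F) - n) * f (m + n) = 0)
    (m : ℤ) : f m = 0 := by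
  rcases eq_or_ne m 0 with rfl | hm
  · simpa [← two_mul, one_add_one_eq_two] using h 1 (-1)
  · simpa [hm] using h m 0

theorem eq_zero_of_sub_one_mul_succ {f r : ℕ → F} (h0 : f 0 = 0) (h1 : f 1 = 0) (h2 : f 2 = 0)
    (hrec : ∀ n : ℕ, ((n : F) - 1) * f (n + 1) = r n * f n) : ∀ n, f n = 0
  | 0 => h0
  | 1 => h1
  | 2 => h2
  | n + 3 => by
    have hne : ((n + 2 : ℕ) : F) - 1 ≠ 0 := by
      rw [show ((n + 2 : ℕ) : F) - 1 = (n + 1 : ℕ) by push_cast; ring]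
      exact Nat.cast_ne_zero.mpr n.succ_ne_zero
    have hprev := eq_zero_of_sub_one_mul_succ h0 h1 h2 hrec (n + 2)
    have hstep := hrec (n + 2)
    rw [hprev, mul_zero] at hstep
    exact (mul_eq_zero.mp hstep).resolve_left hne

namespace IsDensityCocycle

variable {w : F} {f g : ℤ → F}

theorem map_neg_of_weight_ne_one (hf : IsDensityCocycle w f) (hw : w ≠ 0) (hw1 : w ≠ 1) (m : ℤ) :
    f (-m) = -f m := by
  rcases eq_or_ne m 0 with rfl | hm
  · simp [hf.map_zero hw]
  have h := hf m (-m)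
  rw [add_neg_cancel, hf.map_zero hw] at h
  push_cast at h
  have hne : (1 - w) * (m : F) ≠ 0 :=
    mul_ne_zero (sub_ne_zero.mpr hw1.symm) (Int.cast_ne_zero.mpr hm)
  apply mul_left_cancel₀ hne
  linear_combination -h

-- In weight `1` a cocycle need not be odd, so the relations at `(2, -1)` and `(1, -2)` are used.
theorem map_neg_one_and_neg_two_eq_zero (hf : IsDensityCocycle w f) (hw : w ≠ 0)
    (h1 : f 1 = 0) (h2 : f 2 = 0) : f (-1) = 0 ∧ f (-2) = 0 := by
  rcases eq_or_ne w 1 with rfl | hw1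
  · have hneg1 : f (-1) = 0 := by
      have h := hf 2 (-1)
      norm_num [h1, h2] at h
      exact h
    have h := hf 1 (-2)
    norm_num [h1, hneg1] at h
    exact ⟨hneg1, h.symm⟩
  · simp [hf.map_neg_of_weight_ne_one hw hw1, h1, h2]

theorem natCast_eq_zero (hf : IsDensityCocycle w f) (hw : w ≠ 0) (h1 : f 1 = 0) (h2 : f 2 = 0)
    (n : ℕ) : f n = 0 := by
  refine eq_zero_of_sub_one_mul_succ (f := fun n : ℕ => f n) (r := fun n => n + w)
    (hf.map_zero hw) (mod_cast h1) (mod_cast h2) (fun k => ?_) n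
  simpa [h1] using hf k 1

theorem eq_zero_of_map_one_of_map_two (hf : IsDensityCocycle w f) (hw : w ≠ 0)
    (h1 : f 1 = 0) (h2 : f 2 = 0) (m : ℤ) : f m = 0 := by
  obtain ⟨hneg1, hneg2⟩ := hf.map_neg_one_and_neg_two_eq_zero hw h1 h2
  obtain ⟨n, rfl | rfl⟩ := m.eq_nat_or_neg
  · exact hf.natCast_eq_zero hw h1 h2 n
  · exact hf.comp_neg.natCast_eq_zero hw hneg1 hneg2 n

theorem eq_of_map_one_of_map_two (hf : IsDensityCocycle w f) (hg : IsDensityCocycle w g)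
    (hw : w ≠ 0) (h1 : f 1 = g 1) (h2 : f 2 = g 2) (m : ℤ) : f m = g m :=
  sub_eq_zero.mp <| (hf.sub hg).eq_zero_of_map_one_of_map_two hw
    (sub_eq_zero.mpr h1) (sub_eq_zero.mpr h2) m

theorem exists_eq_linear_add_sq (hf : IsDensityCocycle 1 f) :
    ∃ a b : F, ∀ m : ℤ, f m = a * m + b * (m : F) ^ 2 := by
  refine ⟨2 * f 1 - f 2 / 2, f 2 / 2 - f 1,
    hf.eq_of_map_one_of_map_two (fun m n => ?_) one_ne_zero ?_ ?_⟩ <;> push_cast <;> ring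

theorem exists_eq_linear_add_cube (hf : IsDensityCocycle 2 f) :
    ∃ a b : F, ∀ m : ℤ, f m = a * m + b * (m : F) ^ 3 := by
  refine ⟨(8 * f 1 - f 2) / 6, (f 2 - 2 * f 1) / 6,
    hf.eq_of_map_one_of_map_two (fun m n => ?_) two_ne_zero ?_ ?_⟩ <;> push_cast <;> ring

end IsDensityCocycle

namespace IsWittCocycle

variable {K : ℤ → ℤ → F}

theorem eq_zero_of_add_ne_zero (hK : IsWittCocycle K) (hK0 : ∀ m, K 0 m = 0) (m n : ℤ)
    (hmn : m + n ≠ 0) : K m n = 0 := by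
  have jac := hK.jacobi m n 0
  rw [hK.antisymm (m + n) 0, hK0, add_zero, zero_add, hK.antisymm n m] at jac
  have hne : (m : F) + n ≠ 0 := mod_cast hmn
  apply mul_left_cancel₀ hne
  push_cast at jac
  linear_combination -jac

theorem exists_eq_gelfandFuks (hK : IsWittCocycle K) (hK0 : ∀ m, K 0 m = 0)
    (hK1 : K 1 (-1) = 0) :
    ∃ c : F, ∀ m n : ℤ, K m n = c / 12 * ((m : F) ^ 3 - m) * (if m + n = 0 then 1 else 0) := by
  obtain ⟨a, b, hab⟩ := hK.isDensityCocycle_two.exists_eq_linear_add_cube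
  have ha : a = -b := by
    have h := hab 1
    rw [hK1] at h
    push_cast at h
    linear_combination -h
  refine ⟨12 * b, eq_mul_ite_of_antidiagonal (hK.eq_zero_of_add_ne_zero hK0) fun m => ?_⟩
  rw [hab, ha]
  ring

end IsWittCocycle

namespace IsWittCurrentCocycle

variable {V : ℤ → ℤ → F}

theorem eq_zero_of_add_ne_zero (hV : IsWittCurrentCocycle V) (hV0 : ∀ n, n ≠ 0 → V 0 n = 0)
    (m n : ℤ) (hmn : m + n ≠ 0) : V m n = 0 := by
  have jac := hV 0 m n
  rw [zero_add, zero_add, hV0 _ hmn] at jac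
  have hne : (m : F) + n ≠ 0 := mod_cast hmn
  apply mul_left_cancel₀ hne
  push_cast at jac
  linear_combination -jac

theorem exists_eq_linear_add_sq (hV : IsWittCurrentCocycle V) (hV0 : ∀ n, n ≠ 0 → V 0 n = 0) :
    ∃ a b : F, ∀ m n : ℤ,
      V m n = (a * m + b * (m : F) ^ 2) * (if m + n = 0 then 1 else 0) := by
  obtain ⟨a, b, hab⟩ := hV.isDensityCocycle_one.exists_eq_linear_add_sq
  exact ⟨a, b, eq_mul_ite_of_antidiagonal (hV.eq_zero_of_add_ne_zero hV0) hab⟩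

end IsWittCurrentCocycle

variable {κ : F}

theorem coeffLQ_eq_mul_ite {V : ℤ → ℤ → F} {X : ℤ → F} {a b : F}
    (hV : ∀ m n : ℤ, V m n = (a * m + b * (m : F) ^ 2) * (if m + n = 0 then 1 else 0))
    (hX : ∀ m n : ℤ, ((m : F) - n) * X (m + n) - κ * V m n + κ * V n m = 0) (m : ℤ) :
    X m = κ * a * (if m = 0 then 1 else 0) := by
  split_ifs with hm
  · have h := hX 1 (-1)
    simp only [hV, add_neg_cancel, neg_add_cancel, if_true] at h
    push_cast at h
    rw [hm]
    linear_combination h / 2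
  · simpa [hV, hm] using hX m 0

theorem coeffPQ_eq_mul_ite {W : ℤ → ℤ → F} {Y : ℤ → F}
    (hW : ∀ m n, W m n = -W n m)
    (hY : ∀ m n : ℤ, -(n : F) * Y (m + n) - κ * W m n = 0) (m : ℤ) :
    Y m = Y 0 * (if m = 0 then 1 else 0) := by
  split_ifs with hm
  · rw [hm, mul_one]
  · have hmY : (m : F) * Y m = 0 := by
      have h0m := hY 0 m
      have hm0 := hY m 0
      rw [zero_add, hW 0 m] at h0m
      push_cast at hm0
      linear_combination -h0m - hm0
    simpa [hm] using hmY

theorem coeffPP_eq_mul_ite {W : ℤ → ℤ → F} {Y : ℤ → F} (hκ : κ ≠ 0)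
    (hW : ∀ m n, W m n = -W n m)
    (hY : ∀ m n : ℤ, -(n : F) * Y (m + n) - κ * W m n = 0) (m n : ℤ) :
    W m n = Y 0 / κ * m * (if m + n = 0 then 1 else 0) := by
  have hWY (m n : ℤ) : W m n = -n * Y (m + n) / κ := by
    rw [eq_div_iff hκ]
    linear_combination -hY m n
  refine eq_mul_ite_of_antidiagonal (g := fun m => Y 0 / κ * m) (fun m n hmn => ?_)
    (fun m => ?_) m n
  · rw [hWY, coeffPQ_eq_mul_ite hW hY, if_neg hmn, mul_zero, mul_zero, zero_div]
  · rw [hWY, add_neg_cancel]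
    push_cast
    ring

-- Here `κ` is the structure constant in `i[l_m, q] = κ p_m`; the factor `m + 2` rather than `2` in
-- `V` only shifts `d`.
theorem stmt_0_general (hκ : κ ≠ 0)
    (K : Bool → ℤ → ℤ → F) (Kpm : ℤ → ℤ → F) (V Vcross : Bool → ℤ → ℤ → F)
    (W : Bool → ℤ → ℤ → F) (Wpm : ℤ → ℤ → F) (X Y : Bool → ℤ → F)
    (hK : ∀ σ, IsWittCocycle (K σ))
    (hKpm : ∀ m n p : ℤ, ((m : F) - n) * Kpm (m + n) p = 0)
    (hV : ∀ σ, IsWittCurrentCocycle (V σ))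
    (hVcross : ∀ σ (m n p : ℤ), ((m : F) - n) * Vcross σ (m + n) p = 0)
    (hX : ∀ σ (m n : ℤ), ((m : F) - n) * X σ (m + n) - κ * V σ m n + κ * V σ n m = 0)
    (hW : ∀ σ (m n : ℤ), W σ m n = -W σ n m)
    (hWpm : ∀ m n p : ℤ, -(n : F) * Wpm (m + n) p = 0)
    (hY : ∀ σ (m n : ℤ), -(n : F) * Y σ (m + n) - κ * W σ m n = 0)
    (hK0 : ∀ σ (m : ℤ), K σ 0 m = 0)
    (hK1 : ∀ σ, K σ 1 (-1) = 0)
    (hV0 : ∀ σ (n : ℤ), n ≠ 0 → V σ 0 n = 0)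
    (hX0 : X true 0 + X false 0 = 0)
    (hY0 : Y true 0 = Y false 0) :
    ∃ c d : Bool → F, ∃ d0 k : F, ∀ σ (m n : ℤ),
      K σ m n = c σ / 12 * ((m : F) ^ 3 - m) * (if m + n = 0 then 1 else 0) ∧
      Kpm m n = 0 ∧
      V σ m n = (d σ * (m : F) ^ 2 + (if σ then 1 else -1) * (2 * κ)⁻¹ * d0 * m * (m + 2))
          * (if m + n = 0 then 1 else 0) ∧
      Vcross σ m n = 0 ∧
      W σ m n = k * (m : F) * (if m + n = 0 then 1 else 0) ∧
      Wpm m n = 0 ∧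
      X σ m = (if σ then 1 else -1) * d0 * (if m = 0 then 1 else 0) ∧
      Y σ m = κ * k * (if m = 0 then 1 else 0) := by
  choose c hc using fun σ => (hK σ).exists_eq_gelfandFuks (hK0 σ) (hK1 σ)
  choose a b hab using fun σ => (hV σ).exists_eq_linear_add_sq (hV0 σ)
  have hXa (σ) (m : ℤ) := coeffLQ_eq_mul_ite (hab σ) (hX σ) m
  have hκa : ∀ σ, κ * a σ = (if σ then 1 else -1) * X true 0 := by
    have hX0a (σ) : X σ 0 = κ * a σ := by simpa using hXa σ 0
    rintro (_ | _)
    · simpa [← hX0a] using eq_neg_of_add_eq_zero_right hX0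
    · simp [hX0a]
  have hYσ : ∀ σ, Y σ 0 = Y true 0 := Bool.forall_bool.mpr ⟨hY0.symm, rfl⟩
  refine ⟨c, fun σ => b σ - a σ / 2, X true 0, Y true 0 / κ, fun σ m n =>
    ⟨hc σ m n, eq_zero_of_sub_mul_add_eq_zero (f := (Kpm · n)) (hKpm · · n) m, ?_,
      eq_zero_of_sub_mul_add_eq_zero (f := (Vcross σ · n)) (hVcross σ · · n) m, ?_,
      by simpa using hWpm (m - 1) 1 n, ?_, ?_⟩⟩
  · rw [hab, mul_right_comm _ (2 * κ)⁻¹, ← hκa]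
    field_simp
    ring
  · rw [← hYσ σ, coeffPP_eq_mul_ite hκ (hW σ) (hY σ)]
  · rw [hXa, hκa]
  · rw [mul_div_cancel₀ _ hκ, ← hYσ σ, ← coeffPQ_eq_mul_ite (hW σ) (hY σ)]

/-- Classification of central extensions of the asymptotic symmetry algebra of the
generalized Brown-Henneaux boundary conditions.  `K σ`, `Kpm`, `V σ`, `Vcross σ`,
`W σ`, `Wpm`, `X σ`, `Y σ` are the central-extension coefficients in the brackets
`[Lσ,Lσ]`, `[L⁺,L⁻]`, `[Lσ,Pσ]`, `[Lσ,P⁻σ]`, `[Pσ,Pσ]`, `[P⁺,P⁻]`, `[Lσ,Q]`,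
`[Pσ,Q]` respectively; the hypotheses are the Jacobi-identity constraints together
with the normalizations, and the conclusion is the six-parameter form of the
general solution (here only the parameters `c⁺, c⁻, d⁺, d⁻, d₀, k` appear). -/
theorem stmt_0
    (K : Bool → ℤ → ℤ → ℂ) (Kpm : ℤ → ℤ → ℂ)
    (V : Bool → ℤ → ℤ → ℂ) (Vcross : Bool → ℤ → ℤ → ℂ)
    (W : Bool → ℤ → ℤ → ℂ) (Wpm : ℤ → ℤ → ℂ)
    (X : Bool → ℤ → ℂ) (Y : Bool → ℤ → ℂ)
    (hKanti : ∀ σ (m n : ℤ), K σ m n = - K σ n m)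
    (hWanti : ∀ σ (m n : ℤ), W σ m n = - W σ n m)
    (h1 : ∀ σ (m n p : ℤ),
      ((m : ℂ) - n) * K σ (m + n) p + ((n : ℂ) - p) * K σ (n + p) m
        + ((p : ℂ) - m) * K σ (p + m) n = 0)
    (h2 : ∀ m n p : ℤ, ((m : ℂ) - n) * Kpm (m + n) p = 0)
    (h3 : ∀ σ (m n p : ℤ),
      ((m : ℂ) - n) * V σ (m + n) p + (p : ℂ) * (V σ m (n + p) - V σ n (m + p)) = 0)
    (h4 : ∀ σ (m n p : ℤ), ((m : ℂ) - n) * Vcross σ (m + n) p = 0)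
    (h5 : ∀ σ (m n : ℤ),
      ((m : ℂ) - n) * X σ (m + n) - Complex.I / 2 * V σ m n
        + Complex.I / 2 * V σ n m = 0)
    (h6 : ∀ σ (m n p : ℤ), -(n : ℂ) * W σ (m + n) p + (p : ℂ) * W σ (m + p) n = 0)
    (h7 : ∀ m n p : ℤ, -(n : ℂ) * Wpm (m + n) p = 0)
    (h8 : ∀ σ (m n : ℤ), -(n : ℂ) * Y σ (m + n) - Complex.I / 2 * W σ m n = 0)
    (hK0 : ∀ σ (m : ℤ), K σ 0 m = 0)
    (hK1 : ∀ σ, K σ 1 (-1) = 0)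
    (hV0 : ∀ σ (n : ℤ), n ≠ 0 → V σ 0 n = 0)
    (hX0 : X true 0 + X false 0 = 0)
    (hY0 : Y true 0 = Y false 0) :
    ∃ c d : Bool → ℂ, ∃ d0 k : ℂ, ∀ σ (m n : ℤ),
      K σ m n = c σ / 12 * ((m : ℂ) ^ 3 - m) * (if m + n = 0 then 1 else 0) ∧
      Kpm m n = 0 ∧
      V σ m n = (d σ * (m : ℂ) ^ 2 - sgn σ * Complex.I * d0 * m * (m + 2))
          * (if m + n = 0 then 1 else 0) ∧
      Vcross σ m n = 0 ∧
      W σ m n = k * (m : ℂ) * (if m + n = 0 then 1 else 0) ∧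
      Wpm m n = 0 ∧
      X σ m = sgn σ * d0 * (if m = 0 then 1 else 0) ∧
      Y σ m = Complex.I / 2 * k * (if m = 0 then 1 else 0) := by
  have hinv : (2 * (Complex.I / 2))⁻¹ = -Complex.I := by
    rw [mul_div_cancel₀ _ two_ne_zero, Complex.inv_I]
  simpa only [sgn, hinv, mul_neg, neg_mul, ← sub_eq_add_neg] using
    stmt_0_general (κ := Complex.I / 2) (by simp) K Kpm V Vcross W Wpm X Y
      (fun σ => ⟨hKanti σ, h1 σ⟩) h2 h3 h4 h5 hWanti h7 h8 hK0 hK1 hV0 hX0 hY0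
end

section
/- Recovery of the Brown-Henneaux central charges by a change of basis: Let 𝔤 be a Lie algebra over ℂ, let λ be a nonzero complex number (physically λ = l/(8G)), and let L_m, P_m (m ∈ ℤ), Q, C be elements of 𝔤 with C central (i.e. [x,C] = 0 for all x ∈ 𝔤), satisfying for all m, n ∈ ℤ: i[L_m,L_n] = (m−n)L_{m+n}; i[L_m,P_n] = −n·P_{m+n} + i·λ·m²·δ_{m+n,0}·C; i[P_m,P_n] = −λ·m·δ_{m+n,0}·C; i[L_m,Q] = (i/2)P_m; i[P_m,Q] = −i·(λ/2)·δ_{m,0}·C. Define L̃_m := L_m + i·m·P_m. Then for all m, n ∈ ℤ: i[L̃_m,L̃_n] = (m−n)·L̃_{m+n} + λ·m³·δ_{m+n,0}·C (a Virasoro algebra with central charge c = 12λ = 3l/(2G)); i[L̃_m,P_n] = −n·P_{m+n}; and i[L̃_m,Q] = (i/2)P_m. -/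
/-!
Twist the Virasoro generators by a multiple of the derivative of the current, `L m ↦ L m + t m P m`.
The anomaly `κ m²` of `[L, P]` becomes `(κ - t k) m²`, where `k` is the level of `P`, and the
coefficient `c` of the Virasoro cocycle `m³` becomes `c - 2 t κ + t² k`. The twist with `κ = t k`
removes the anomaly and shifts the cocycle by `-t² k`; at `t = i` and `c = 0` this leaves `k m³`.
-/

/-- The generators `L m + t m P m`: the twist, with parameter `t`, of the modes `L` by the
derivative of the current with modes `P`. -/
def twist {R M : Type*} [Ring R] [AddCommGroup M] [Module R M] (t : R) (L P : ℤ → M) (m : ℤ) : M :=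
  L m + (t * (m : R)) • P m

section Twist

variable {R 𝔤 : Type*} [CommRing R] [LieRing 𝔤] [LieAlgebra R 𝔤]
  {s k κ a b c : R} {L P : ℤ → 𝔤} {Q C : 𝔤}

theorem smul_twist_lie (s t : R) (L P : ℤ → 𝔤) (m : ℤ) (x : 𝔤) :
    s • ⁅twist t L P m, x⁆ = s • ⁅L m, x⁆ + (t * (m : R)) • s • ⁅P m, x⁆ := by
  rw [twist, add_lie, smul_lie, smul_add, smul_comm s]

theorem smul_lie_twist (s t : R) (L P : ℤ → 𝔤) (x : 𝔤) (n : ℤ) :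
    s • ⁅x, twist t L P n⁆ = s • ⁅x, L n⁆ + (t * (n : R)) • s • ⁅x, P n⁆ := by
  rw [twist, lie_add, lie_smul, smul_add, smul_comm s]

theorem smul_twist_lie_current (t : R)
    (hLP : ∀ m n : ℤ, s • ⁅L m, P n⁆ =
      (-(n : R)) • P (m + n) + (κ * (m : R) ^ 2 * (if m + n = 0 then 1 else 0)) • C)
    (hPP : ∀ m n : ℤ, s • ⁅P m, P n⁆ = (-(k * (m : R)) * (if m + n = 0 then 1 else 0)) • C)
    (m n : ℤ) :
    s • ⁅twist t L P m, P n⁆ =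
      (-(n : R)) • P (m + n)
        + ((κ - t * k) * (m : R) ^ 2 * (if m + n = 0 then 1 else 0)) • C := by
  rw [smul_twist_lie, hLP, hPP]
  module

theorem smul_current_lie
    (hLP : ∀ m n : ℤ, s • ⁅L m, P n⁆ =
      (-(n : R)) • P (m + n) + (κ * (m : R) ^ 2 * (if m + n = 0 then 1 else 0)) • C)
    (m n : ℤ) :
    s • ⁅P m, L n⁆ =
      (m : R) • P (m + n) - (κ * (n : R) ^ 2 * (if m + n = 0 then 1 else 0)) • C := by
  rw [← lie_skew, smul_neg, hLP, add_comm n m]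
  module

theorem smul_twist_lie_twist (t : R)
    (hLL : ∀ m n : ℤ, s • ⁅L m, L n⁆ =
      ((m : R) - n) • L (m + n) + (c * (m : R) ^ 3 * (if m + n = 0 then 1 else 0)) • C)
    (hLP : ∀ m n : ℤ, s • ⁅L m, P n⁆ =
      (-(n : R)) • P (m + n) + (κ * (m : R) ^ 2 * (if m + n = 0 then 1 else 0)) • C)
    (hPP : ∀ m n : ℤ, s • ⁅P m, P n⁆ = (-(k * (m : R)) * (if m + n = 0 then 1 else 0)) • C)
    (m n : ℤ) :
    s • ⁅twist t L P m, twist t L P n⁆ =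
      ((m : R) - n) • twist t L P (m + n)
        + ((c - 2 * t * κ + t ^ 2 * k) * (m : R) ^ 3 * (if m + n = 0 then 1 else 0)) • C := by
  have cocycle_eq :
      (c * (m : R) ^ 3 - t * m * (κ * (n : R) ^ 2) + t * n * ((κ - t * k) * (m : R) ^ 2))
          * (if m + n = 0 then 1 else 0)
        = (c - 2 * t * κ + t ^ 2 * k) * (m : R) ^ 3 * (if m + n = 0 then 1 else 0) := by
    by_cases h : m + n = 0
    · obtain rfl : n = -m := eq_neg_of_add_eq_zero_right h
      push_cast
      ring
    · simp only [if_neg h, mul_zero]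
  rw [smul_lie_twist, smul_twist_lie_current t hLP hPP, smul_twist_lie, hLL,
    smul_current_lie hLP, ← cocycle_eq, twist]
  push_cast
  module

theorem smul_twist_lie_eq_smul_current (t : R)
    (hLQ : ∀ m : ℤ, s • ⁅L m, Q⁆ = a • P m)
    (hPQ : ∀ m : ℤ, s • ⁅P m, Q⁆ = (b * (if m = 0 then 1 else 0)) • C) (m : ℤ) :
    s • ⁅twist t L P m, Q⁆ = a • P m := by
  rw [smul_twist_lie, hLQ, hPQ]
  by_cases h : m = 0 <;> simp [h]

theorem stmt_1_general (t : R)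
    (hLL : ∀ m n : ℤ, s • ⁅L m, L n⁆ =
      ((m : R) - n) • L (m + n) + (c * (m : R) ^ 3 * (if m + n = 0 then 1 else 0)) • C)
    (hLP : ∀ m n : ℤ, s • ⁅L m, P n⁆ =
      (-(n : R)) • P (m + n) + (t * k * (m : R) ^ 2 * (if m + n = 0 then 1 else 0)) • C)
    (hPP : ∀ m n : ℤ, s • ⁅P m, P n⁆ = (-(k * (m : R)) * (if m + n = 0 then 1 else 0)) • C)
    (hLQ : ∀ m : ℤ, s • ⁅L m, Q⁆ = a • P m)
    (hPQ : ∀ m : ℤ, s • ⁅P m, Q⁆ = (b * (if m = 0 then 1 else 0)) • C) (m n : ℤ) :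
    (s • ⁅twist t L P m, twist t L P n⁆ =
      ((m : R) - n) • twist t L P (m + n)
        + ((c - t ^ 2 * k) * (m : R) ^ 3 * (if m + n = 0 then 1 else 0)) • C) ∧
    (s • ⁅twist t L P m, P n⁆ = (-(n : R)) • P (m + n)) ∧
    (s • ⁅twist t L P m, Q⁆ = a • P m) := by
  refine ⟨?_, ?_, smul_twist_lie_eq_smul_current t hLQ hPQ m⟩
  · rw [smul_twist_lie_twist t hLL hLP hPP]
    module
  · rw [smul_twist_lie_current t hLP hPP]
    module

end Twist

/-- Recovery of the Brown-Henneaux central charges by a change of basis: in a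
complex Lie algebra `𝔤` with elements `L m`, `P m`, `Q` and a central element `C`
satisfying the commutation relations of one chiral half of the centrally extended
asymptotic symmetry algebra (with `lam = l/(8G)`), the redefined generators
`Lt m = L m + i m • P m` form a Virasoro algebra with central charge `c = 12 lam`,
acting on the currents without central terms. -/
theorem stmt_1 {𝔤 : Type*} [LieRing 𝔤] [LieAlgebra ℂ 𝔤]
    (lam : ℂ) (hlam : lam ≠ 0)
    (L P : ℤ → 𝔤) (Q C : 𝔤)
    (hC : ∀ x : 𝔤, ⁅x, C⁆ = 0)
    (hLL : ∀ m n : ℤ, Complex.I • ⁅L m, L n⁆ = ((m : ℂ) - n) • L (m + n))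
    (hLP : ∀ m n : ℤ, Complex.I • ⁅L m, P n⁆ =
      (-(n : ℂ)) • P (m + n)
        + (Complex.I * lam * (m : ℂ) ^ 2 * (if m + n = 0 then 1 else 0)) • C)
    (hPP : ∀ m n : ℤ, Complex.I • ⁅P m, P n⁆ =
      (-(lam * (m : ℂ)) * (if m + n = 0 then 1 else 0)) • C)
    (hLQ : ∀ m : ℤ, Complex.I • ⁅L m, Q⁆ = (Complex.I / 2) • P m)
    (hPQ : ∀ m : ℤ, Complex.I • ⁅P m, Q⁆ =
      (-(Complex.I * (lam / 2)) * (if m = 0 then 1 else 0)) • C)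
    (Lt : ℤ → 𝔤) (hLt : ∀ m : ℤ, Lt m = L m + (Complex.I * (m : ℂ)) • P m) :
    ∀ m n : ℤ,
      (Complex.I • ⁅Lt m, Lt n⁆ =
        ((m : ℂ) - n) • Lt (m + n)
          + (lam * (m : ℂ) ^ 3 * (if m + n = 0 then 1 else 0)) • C) ∧
      (Complex.I • ⁅Lt m, P n⁆ = (-(n : ℂ)) • P (m + n)) ∧
      (Complex.I • ⁅Lt m, Q⁆ = (Complex.I / 2) • P m) := by
  obtain rfl : Lt = twist Complex.I L P := funext hLt
  simpa using stmt_1_general (c := 0) Complex.I (by simpa using hLL) hLP hPP hLQ hPQ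
end

section
/- The six-parameter centrally extended algebra closes: For any complex numbers c⁺, c⁻, d⁺, d⁻, d₀, k, the alternating bilinear bracket defined on the free ℂ-vector space with basis {Lσ_m : σ ∈ {+,−}, m ∈ ℤ} ∪ {Pσ_m : σ ∈ {+,−}, m ∈ ℤ} ∪ {Q, C} by: i[Lσ_m, Lσ_n] = (m−n)Lσ_{m+n} + (cσ/12)m³δ_{m+n,0}·C; [L⁺_m, L⁻_n] = 0; i[Lσ_m, Pσ_n] = −n·Pσ_{m+n} + (dσ·m² − σ·i·d₀·m(m+2))δ_{m+n,0}·C; [Lσ_m, P^{−σ}_n] = 0; i[Pσ_m, Pσ_n] = k·m·δ_{m+n,0}·C; [P⁺_m, P⁻_n] = 0; i[Lσ_m, Q] = (i/2)Pσ_m + σ·d₀·δ_{m,0}·C; i[Pσ_m, Q] = (i/2)·k·δ_{m,0}·C; and [x, C] = 0 for all basis elements x, satisfies the Jacobi identity, i.e. defines a Lie algebra structure over ℂ. -/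
/-- Basis elements of the centrally extended asymptotic symmetry algebra:
`L σ m`, `P σ m` (with chirality `σ`, `true = +`, `false = -`), `Q` and the
central element `C`. -/
inductive BasisElem
  | L (σ : Bool) (m : ℤ)
  | P (σ : Bool) (m : ℤ)
  | Q
  | C

/-- The canonical basis vector of the free ℂ-vector space on `BasisElem`. -/
noncomputable def e (b : BasisElem) : BasisElem →₀ ℂ := Finsupp.single b 1

/-!
Up to the factor `i`, the algebra without `C` acts geometrically on two circles: `L σ m` is the
vector field `-T ^ m (T d/dT)`, `P σ m` the function `T ^ m` and `Q` the multivalued function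
`-(i/2) log T`. Since only the derivative of `Q` enters a bracket, the Jacobi identity is the
Leibniz rule for `T d/dT`. The central terms are residue cocycles, `res (v' w'')`, `res (v' F')`
and `res (F G')`, whose cocycle conditions follow from the Leibniz rule and the vanishing of
residues of total derivatives. The parameter `d0` splits as
`d m² - σ i d0 m (m + 2) = (d - σ i d0) m² - 2 σ i d0 m`, a mixed cocycle plus the coboundary
produced by shifting `P σ 0`; the same shift accounts for the `d0` term of `[L σ 0, Q]`.
-/

section LieBracket

variable {R M M' N : Type*} [CommRing R] [AddCommGroup M] [Module R M] [AddCommGroup M']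
  [Module R M'] [AddCommGroup N] [Module R N]

/-- A bilinear map is a Lie bracket if it is alternating and satisfies the Jacobi identity. It is
kept unbundled from `LieRing` because products of rings already carry a commutator bracket. -/
structure IsLieBracket (B : M →ₗ[R] M →ₗ[R] M) : Prop where
  isAlt : B.IsAlt
  jacobi : ∀ x y z, B (B x y) z + B (B y z) x + B (B z x) y = 0

/-- A 2-cocycle for the bracket `B` with values in the trivial module `N`: the datum of a central
extension of `B` by `N`. -/
structure IsTwoCocycle (B : M →ₗ[R] M →ₗ[R] M) (ω : M →ₗ[R] M →ₗ[R] N) : Prop where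
  isAlt : ω.IsAlt
  cocycle : ∀ x y z, ω (B x y) z + ω (B y z) x + ω (B z x) y = 0

theorem IsTwoCocycle.add {B : M →ₗ[R] M →ₗ[R] M} {ω η : M →ₗ[R] M →ₗ[R] N}
    (hω : IsTwoCocycle B ω) (hη : IsTwoCocycle B η) : IsTwoCocycle B (ω + η) where
  isAlt x := by simp [hω.isAlt x, hη.isAlt x]
  cocycle x y z := by
    simp only [LinearMap.add_apply]
    linear_combination (norm := module) hω.cocycle x y z + hη.cocycle x y z

namespace IsLieBracket

variable {B : M →ₗ[R] M →ₗ[R] M}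

theorem isTwoCocycle_coboundary (hB : IsLieBracket B) (ℓ : M →ₗ[R] N) :
    IsTwoCocycle B (B.compr₂ ℓ) where
  isAlt x := by simp [hB.isAlt x]
  cocycle x y z := by simp only [LinearMap.compr₂_apply, ← map_add, hB.jacobi, map_zero]

theorem smul (hB : IsLieBracket B) (r : R) : IsLieBracket (r • B) where
  isAlt x := by simp [hB.isAlt x]
  jacobi x y z := by
    simp only [LinearMap.smul_apply, map_smul, ← smul_add, hB.jacobi, smul_zero]

theorem conj (hB : IsLieBracket B) (φ : M' ≃ₗ[R] M) :
    IsLieBracket ((B.compl₁₂ φ.toLinearMap φ.toLinearMap).compr₂ φ.symm.toLinearMap) where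
  isAlt x := by simp [hB.isAlt (φ x)]
  jacobi x y z := by
    simp only [LinearMap.compr₂_apply, LinearMap.compl₁₂_apply, LinearEquiv.coe_coe,
      LinearEquiv.apply_symm_apply, ← map_add, hB.jacobi, map_zero]

end IsLieBracket

/-- The bracket on `M × N` twisting `B` by the 2-cochain `ω`, with `N` central. -/
def centralExtension (B : M →ₗ[R] M →ₗ[R] M) (ω : M →ₗ[R] M →ₗ[R] N) :
    M × N →ₗ[R] M × N →ₗ[R] M × N :=
  LinearMap.mk₂ R (fun x y ↦ (B x.1 y.1, ω x.1 y.1)) (by simp) (by simp) (by simp) (by simp)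

@[simp]
theorem centralExtension_apply (B : M →ₗ[R] M →ₗ[R] M) (ω : M →ₗ[R] M →ₗ[R] N) (x y : M × N) :
    centralExtension B ω x y = (B x.1 y.1, ω x.1 y.1) :=
  rfl

theorem IsLieBracket.centralExtension {B : M →ₗ[R] M →ₗ[R] M} {ω : M →ₗ[R] M →ₗ[R] N}
    (hB : IsLieBracket B) (hω : IsTwoCocycle B ω) : IsLieBracket (centralExtension B ω) where
  isAlt x := by simp [hB.isAlt x.1, hω.isAlt x.1]
  jacobi x y z := by simp [hB.jacobi, hω.cocycle]

end LieBracket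

section LogCurrent

variable {R A : Type*} [CommRing R] [CommRing A] [Algebra R A] (D : Derivation R A A) (q : A)

/-- The extension of `D` to functions with a logarithm: `(f, s)` stands for `f + s λ`, where `λ` is
a formal primitive of `q`. -/
def logDerivation : A × R →ₗ[R] A :=
  D.toLinearMap.coprod (LinearMap.toSpanSingleton R A q)

theorem logDerivation_apply (F : A × R) : logDerivation D q F = D F.1 + F.2 • q :=
  rfl

@[simp]
theorem logDerivation_mk_zero (f : A) : logDerivation D q (f, 0) = D f := by
  simp [logDerivation_apply]

@[simp]
theorem logDerivation_zero_mk (s : R) : logDerivation D q (0, s) = s • q := by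
  simp [logDerivation_apply]

/-- The bracket of the vector fields `-v D` in semidirect product with the abelian algebra of
functions with a logarithm; `(v, f, s)` stands for `-v D + (f + s λ)`. -/
def logCurrentBracket : A × A × R →ₗ[R] A × A × R →ₗ[R] A × A × R :=
  LinearMap.mk₂ R
    (fun x y ↦ (D x.1 * y.1 - x.1 * D y.1,
      y.1 * logDerivation D q x.2 - x.1 * logDerivation D q y.2, 0))
    (fun _ _ _ ↦ by
      ext <;> simp only [Prod.fst_add, Prod.snd_add, map_add, Prod.mk_add_mk, add_zero] <;> ring)
    (fun _ _ _ ↦ by ext <;> simp [smul_sub])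
    (fun _ _ _ ↦ by
      ext <;> simp only [Prod.fst_add, Prod.snd_add, map_add, Prod.mk_add_mk, add_zero] <;> ring)
    (fun _ _ _ ↦ by ext <;> simp [smul_sub])

theorem logCurrentBracket_apply (x y : A × A × R) :
    logCurrentBracket D q x y = (D x.1 * y.1 - x.1 * D y.1,
      y.1 * logDerivation D q x.2 - x.1 * logDerivation D q y.2, 0) :=
  rfl

theorem isLieBracket_logCurrentBracket : IsLieBracket (logCurrentBracket D q) where
  isAlt x := by simp [logCurrentBracket_apply, mul_comm]
  jacobi x y z := by
    simp only [logCurrentBracket_apply, map_sub, Derivation.leibniz, smul_eq_mul,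
      logDerivation_mk_zero, Prod.mk_add_mk, Prod.mk_eq_zero, add_zero, and_true]
    constructor <;> ring

variable (τ : A →ₗ[R] R)

/-- The Gelfand–Fuchs (Virasoro) 2-cochain `τ (v' w'')`. -/
def virasoroCochain : A × A × R →ₗ[R] A × A × R →ₗ[R] R :=
  LinearMap.mk₂ R (fun x y ↦ τ (D x.1 * D (D y.1)))
    (by simp [add_mul]) (by simp) (by simp [mul_add]) (by simp)

theorem virasoroCochain_apply (x y : A × A × R) :
    virasoroCochain D τ x y = τ (D x.1 * D (D y.1)) :=
  rfl

/-- The 2-cochain pairing the vector field `-v D` and the function `F` to `-τ (v' F')`. -/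
def mixedCochain : A × A × R →ₗ[R] A × A × R →ₗ[R] R :=
  LinearMap.mk₂ R
    (fun x y ↦ τ (D y.1 * logDerivation D q x.2 - D x.1 * logDerivation D q y.2))
    (fun _ _ _ ↦ by rw [← map_add]; congr 1; simp only [Prod.fst_add, Prod.snd_add, map_add]; ring)
    (fun _ _ _ ↦ by rw [← map_smul]; congr 1; simp [smul_sub])
    (fun _ _ _ ↦ by rw [← map_add]; congr 1; simp only [Prod.fst_add, Prod.snd_add, map_add]; ring)
    (fun _ _ _ ↦ by rw [← map_smul]; congr 1; simp [smul_sub])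

theorem mixedCochain_apply (x y : A × A × R) :
    mixedCochain D q τ x y =
      τ (D y.1 * logDerivation D q x.2 - D x.1 * logDerivation D q y.2) :=
  rfl

/-- The Heisenberg 2-cochain `-τ (F G')` on functions with a logarithm, where integration by parts
defines `τ (λ g')` as `-τ (g q)`, and `τ (λ λ')` is taken to be `0`. -/
def heisenbergCochain : A × A × R →ₗ[R] A × A × R →ₗ[R] R :=
  LinearMap.mk₂ R (fun x y ↦ x.2.2 * τ (y.2.1 * q) - τ (x.2.1 * logDerivation D q y.2))
    (fun _ _ _ ↦ by simp only [Prod.fst_add, Prod.snd_add, add_mul, map_add]; ring)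
    (fun _ _ _ ↦ by
      simp only [Prod.smul_fst, Prod.smul_snd, smul_mul_assoc, map_smul, smul_eq_mul]; ring)
    (fun _ _ _ ↦ by simp only [Prod.fst_add, Prod.snd_add, add_mul, mul_add, map_add]; ring)
    (fun _ _ _ ↦ by
      simp only [Prod.smul_fst, Prod.smul_snd, smul_mul_assoc, mul_smul_comm, map_smul, smul_eq_mul]
      ring)

theorem heisenbergCochain_apply (x y : A × A × R) :
    heisenbergCochain D q τ x y = x.2.2 * τ (y.2.1 * q) - τ (x.2.1 * logDerivation D q y.2) :=
  rfl

variable {D q τ}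

theorem map_self_mul_derivation_eq_zero [IsAddTorsionFree R] (hτ : ∀ a, τ (D a) = 0) (a : A) :
    τ (a * D a) = 0 := by
  have h := hτ (a * a)
  rw [D.leibniz, smul_eq_mul, map_add] at h
  exact self_eq_neg.mp (eq_neg_of_add_eq_zero_left h)

theorem isTwoCocycle_virasoroCochain [IsAddTorsionFree R] (hτ : ∀ a, τ (D a) = 0) :
    IsTwoCocycle (logCurrentBracket D q) (virasoroCochain D τ) where
  isAlt x := map_self_mul_derivation_eq_zero hτ (D x.1)
  cocycle x y z := by
    simp only [virasoroCochain_apply, ← map_add]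
    rw [← map_zero τ]
    congr 1
    simp only [logCurrentBracket_apply, map_sub, Derivation.leibniz, smul_eq_mul]
    ring

theorem isTwoCocycle_mixedCochain (hτ : ∀ a, τ (D a) = 0) :
    IsTwoCocycle (logCurrentBracket D q) (mixedCochain D q τ) where
  isAlt x := by simp [mixedCochain_apply]
  cocycle := by
    rintro ⟨u, F⟩ ⟨v, G⟩ ⟨w, H⟩
    simp only [mixedCochain_apply, ← map_add]
    rw [← hτ ((u * D v - D u * v) * logDerivation D q H +
      (v * D w - D v * w) * logDerivation D q F + (w * D u - D w * u) * logDerivation D q G)]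
    congr 1
    simp only [logCurrentBracket_apply, logDerivation_mk_zero, map_sub, map_add,
      Derivation.leibniz, smul_eq_mul]
    ring

theorem isTwoCocycle_heisenbergCochain [IsAddTorsionFree R] (hτ : ∀ a, τ (D a) = 0) :
    IsTwoCocycle (logCurrentBracket D q) (heisenbergCochain D q τ) where
  isAlt x := by
    simp [heisenbergCochain_apply, logDerivation_apply, mul_add,
      map_self_mul_derivation_eq_zero hτ]
  cocycle x y z := by
    simp only [heisenbergCochain_apply, logCurrentBracket_apply, zero_mul, sub_mul, map_sub]
    ring_nf

end LogCurrent

section LaurentPolynomial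

open LaurentPolynomial

section Euler

variable (K : Type*) [CommRing K]

/-- The operator `T d/dT` on Laurent polynomials, as a linear map. -/
noncomputable def eulerLinearMap : K[T;T⁻¹] →ₗ[K] K[T;T⁻¹] :=
  (AddMonoidAlgebra.basis ℤ K).constr K fun n : ℤ ↦ (n : K) • (T n : K[T;T⁻¹])

theorem eulerLinearMap_T (n : ℤ) : eulerLinearMap K (T n) = (n : K) • T n :=
  (AddMonoidAlgebra.basis ℤ K).constr_basis K _ n

theorem eulerLinearMap_mul (a b : K[T;T⁻¹]) :
    eulerLinearMap K (a * b) = a • eulerLinearMap K b + b • eulerLinearMap K a := by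
  induction a using LaurentPolynomial.induction_on' with
  | add a₁ a₂ h₁ h₂ => simp only [add_mul, map_add, h₁, h₂, add_smul, smul_add]; abel
  | C_mul_T m r =>
    induction b using LaurentPolynomial.induction_on' with
    | add b₁ b₂ h₁ h₂ => simp only [mul_add, map_add, h₁, h₂, add_smul, smul_add]; abel
    | C_mul_T n s =>
      have T_mul_T : (T n * T m : K[T;T⁻¹]) = T (m + n) := by rw [← T_add, add_comm]
      simp only [← smul_eq_C_mul, ← T_add, map_smul, eulerLinearMap_T,
        smul_eq_mul, mul_smul_comm, smul_mul_assoc, T_mul_T]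
      push_cast
      module

/-- The Euler derivation `T d/dT` of Laurent polynomials. -/
noncomputable def eulerDerivation : Derivation K K[T;T⁻¹] K[T;T⁻¹] :=
  Derivation.mk' (eulerLinearMap K) (eulerLinearMap_mul K)

@[simp]
theorem eulerDerivation_T (n : ℤ) : eulerDerivation K (T n) = (n : K) • T n :=
  eulerLinearMap_T K n

end Euler

/-- The algebra `ℂ[T;T⁻¹] × ℂ[T;T⁻¹]` of pairs of Laurent polynomials, one for each chirality,
encoded as Laurent polynomials with coefficients in `ℂ × ℂ`. -/
abbrev ChiralLaurent : Type := (Bool → ℂ)[T;T⁻¹]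

namespace ChiralLaurent

/-- The monomial `T ^ m` of chirality `σ`. -/
noncomputable def mode (σ : Bool) (m : ℤ) : ChiralLaurent :=
  (Pi.single σ 1 : Bool → ℂ) • T m

/-- The modes as a basis. -/
noncomputable def modeBasis : Module.Basis (Bool × ℤ) ℂ ChiralLaurent :=
  (Pi.basisFun ℂ Bool).smulTower (AddMonoidAlgebra.basis ℤ (Bool → ℂ))

@[simp]
theorem modeBasis_apply (p : Bool × ℤ) : modeBasis p = mode p.1 p.2 := by
  simp [modeBasis, mode]

@[simp]
theorem mode_mul_mode_self (σ : Bool) (m n : ℤ) : mode σ m * mode σ n = mode σ (m + n) := by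
  rw [mode, mode, mode, smul_mul_smul_comm, ← T_add, ← Pi.single_mul, one_mul]

theorem mode_mul_mode_of_ne {σ τ : Bool} (h : σ ≠ τ) (m n : ℤ) : mode σ m * mode τ n = 0 := by
  have orthogonal : (Pi.single σ 1 * Pi.single τ 1 : Bool → ℂ) = 0 := by
    ext υ
    simp only [Pi.mul_apply, Pi.single_apply, Pi.zero_apply]
    grind
  rw [mode, mode, smul_mul_smul_comm, orthogonal, zero_smul]

/-- The Euler derivation acting on both chiralities. -/
noncomputable def euler : Derivation ℂ ChiralLaurent ChiralLaurent :=
  (eulerDerivation (Bool → ℂ)).restrictScalars ℂ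

@[simp]
theorem euler_mode (σ : Bool) (m : ℤ) : euler (mode σ m) = (m : ℂ) • mode σ m := by
  rw [euler, Derivation.restrictScalars_apply, mode, Derivation.map_smul, eulerDerivation_T,
    Int.cast_smul_eq_zsmul, Int.cast_smul_eq_zsmul, smul_comm]

/-- The sum of the residues of `f dT / T` in the two chiralities, weighted by `w`. -/
noncomputable def residue (w : Bool → ℂ) : ChiralLaurent →ₗ[ℂ] ℂ :=
  modeBasis.constr ℂ fun p ↦ w p.1 * if p.2 = 0 then 1 else 0

@[simp]
theorem residue_mode (w : Bool → ℂ) (σ : Bool) (m : ℤ) :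
    residue w (mode σ m) = w σ * if m = 0 then 1 else 0 := by
  rw [← modeBasis_apply (σ, m), residue, Module.Basis.constr_basis]

theorem residue_euler (w : Bool → ℂ) (a : ChiralLaurent) : residue w (euler a) = 0 := by
  suffices residue w ∘ₗ euler.toLinearMap = 0 from LinearMap.congr_fun this a
  refine modeBasis.ext fun p ↦ ?_
  simp +contextual

end ChiralLaurent

end LaurentPolynomial

section AsymptoticSymmetry

open ChiralLaurent

/-- The space of triples (vector field, function, coefficient of the logarithm) together with a
central coordinate. -/
abbrev ExtendedCurrents : Type := (ChiralLaurent × ChiralLaurent × ℂ) × ℂ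

/-- The derivative of `Q`, which is thus realised as `-(i/2) log T` in both chiralities. -/
noncomputable def logSlope : ChiralLaurent := -(Complex.I / 2) • (1 : ChiralLaurent)

@[simp]
theorem mul_logSlope (a : ChiralLaurent) : a * logSlope = -(Complex.I / 2) • a := by
  rw [logSlope, mul_smul_comm, mul_one]

/-- The 2-cocycle of the six-parameter extension. The coboundary comes from shifting `P σ 0` by a
multiple of the central element. -/
noncomputable def sixParameterCocycle (c d : Bool → ℂ) (d0 k : ℂ) :
    ChiralLaurent × ChiralLaurent × ℂ →ₗ[ℂ] ChiralLaurent × ChiralLaurent × ℂ →ₗ[ℂ] ℂ :=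
  virasoroCochain euler (residue fun σ ↦ c σ / 12)
    + mixedCochain euler logSlope (residue fun σ ↦ d σ - sgn σ * Complex.I * d0)
    + heisenbergCochain euler logSlope (residue fun _ ↦ k)
    + (logCurrentBracket euler logSlope).compr₂
        (residue (fun σ ↦ -2 * Complex.I * sgn σ * d0) ∘ₗ LinearMap.fst .. ∘ₗ LinearMap.snd ..)

theorem sixParameterCocycle_apply (c d : Bool → ℂ) (d0 k : ℂ)
    (x y : ChiralLaurent × ChiralLaurent × ℂ) :
    sixParameterCocycle c d d0 k x y =
      residue (fun σ ↦ c σ / 12) (euler x.1 * euler (euler y.1))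
      + residue (fun σ ↦ d σ - sgn σ * Complex.I * d0)
          (euler y.1 * logDerivation euler logSlope x.2
            - euler x.1 * logDerivation euler logSlope y.2)
      + (x.2.2 * residue (fun _ ↦ k) (y.2.1 * logSlope)
        - residue (fun _ ↦ k) (x.2.1 * logDerivation euler logSlope y.2))
      + residue (fun σ ↦ -2 * Complex.I * sgn σ * d0)
          (y.1 * logDerivation euler logSlope x.2 - x.1 * logDerivation euler logSlope y.2) :=
  rfl

theorem isTwoCocycle_sixParameterCocycle (c d : Bool → ℂ) (d0 k : ℂ) :
    IsTwoCocycle (logCurrentBracket euler logSlope) (sixParameterCocycle c d d0 k) :=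
  (((isTwoCocycle_virasoroCochain (residue_euler _)).add
    (isTwoCocycle_mixedCochain (residue_euler _))).add
    (isTwoCocycle_heisenbergCochain (residue_euler _))).add
    ((isLieBracket_logCurrentBracket euler logSlope).isTwoCocycle_coboundary _)

/-- The rescaled bracket `i [x, y]` of the six-parameter extension. -/
noncomputable def sixParameterBracket (c d : Bool → ℂ) (d0 k : ℂ) :
    ExtendedCurrents →ₗ[ℂ] ExtendedCurrents →ₗ[ℂ] ExtendedCurrents :=
  centralExtension (logCurrentBracket euler logSlope) (sixParameterCocycle c d d0 k)

theorem sixParameterBracket_apply (c d : Bool → ℂ) (d0 k : ℂ) (x y : ExtendedCurrents) :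
    sixParameterBracket c d d0 k x y =
      ((euler x.1.1 * y.1.1 - x.1.1 * euler y.1.1,
        y.1.1 * logDerivation euler logSlope x.1.2 - x.1.1 * logDerivation euler logSlope y.1.2,
        0), sixParameterCocycle c d d0 k x.1 y.1) :=
  rfl

theorem isLieBracket_sixParameterBracket (c d : Bool → ℂ) (d0 k : ℂ) :
    IsLieBracket (sixParameterBracket c d d0 k) :=
  (isLieBracket_logCurrentBracket euler logSlope).centralExtension
    (isTwoCocycle_sixParameterCocycle c d d0 k)

/-- The generators, sorted into the summands of `ExtendedCurrents`. -/
def basisElemEquiv : BasisElem ≃ ((Bool × ℤ) ⊕ (Bool × ℤ) ⊕ Unit) ⊕ Unit where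
  toFun
    | .L σ m => .inl (.inl (σ, m))
    | .P σ m => .inl (.inr (.inl (σ, m)))
    | .Q => .inl (.inr (.inr ()))
    | .C => .inr ()
  invFun
    | .inl (.inl (σ, m)) => .L σ m
    | .inl (.inr (.inl (σ, m))) => .P σ m
    | .inl (.inr (.inr ())) => .Q
    | .inr () => .C
  left_inv b := by cases b <;> rfl
  right_inv := by rintro ((_ | _ | _) | _) <;> rfl

/-- The realisation of the abstract generators: `L σ m` is the vector field `-T ^ m (T d/dT)`,
`P σ m` the function `T ^ m`, `Q` the logarithm and `C` the central coordinate. -/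
noncomputable def generator : Module.Basis BasisElem ℂ ExtendedCurrents :=
  ((modeBasis.prod (modeBasis.prod (.singleton Unit ℂ))).prod (.singleton Unit ℂ)).reindex
    basisElemEquiv.symm

@[simp]
theorem generator_L (σ : Bool) (m : ℤ) : generator (.L σ m) = ((mode σ m, 0, 0), 0) := by
  simp [generator, basisElemEquiv, Prod.zero_eq_mk]

@[simp]
theorem generator_P (σ : Bool) (m : ℤ) : generator (.P σ m) = ((0, mode σ m, 0), 0) := by
  simp [generator, basisElemEquiv]

@[simp]
theorem generator_Q : generator .Q = ((0, 0, 1), 0) := by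
  simp [generator, basisElemEquiv]

@[simp]
theorem generator_C : generator .C = (0, 1) := by
  simp [generator, basisElemEquiv]

section Relations

variable (c d : Bool → ℂ) (d0 k : ℂ)

theorem sixParameterBracket_L_L_self (σ : Bool) (m n : ℤ) :
    sixParameterBracket c d d0 k (generator (.L σ m)) (generator (.L σ n)) =
      ((m : ℂ) - n) • generator (.L σ (m + n))
        + (c σ / 12 * (m : ℂ) ^ 3 * (if m + n = 0 then 1 else 0)) • generator .C := by
  obtain h | h := eq_or_ne (m + n) 0
  · have hn : (n : ℂ) = -m := by exact_mod_cast eq_neg_of_add_eq_zero_right h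
    have central : (n : ℂ) * (n * (m * (c σ / 12))) = c σ / 12 * m ^ 3 := by
      rw [hn]; ring
    simp [sixParameterBracket_apply, sixParameterCocycle_apply, sub_smul, h, central]
  · simp [sixParameterBracket_apply, sixParameterCocycle_apply, sub_smul, h]

theorem sixParameterBracket_L_P_self (σ : Bool) (m n : ℤ) :
    sixParameterBracket c d d0 k (generator (.L σ m)) (generator (.P σ n)) =
      (-(n : ℂ)) • generator (.P σ (m + n))
        + ((d σ * (m : ℂ) ^ 2 - sgn σ * Complex.I * d0 * m * (m + 2))
            * (if m + n = 0 then 1 else 0)) • generator .C := by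
  obtain h | h := eq_or_ne (m + n) 0
  · have hn : (n : ℂ) = -m := by exact_mod_cast eq_neg_of_add_eq_zero_right h
    have central : -((n : ℂ) * (m * (d σ - sgn σ * Complex.I * d0)))
        + n * (2 * Complex.I * sgn σ * d0) =
          d σ * m ^ 2 - sgn σ * Complex.I * d0 * m * (m + 2) := by
      rw [hn]; ring
    simp [sixParameterBracket_apply, sixParameterCocycle_apply, h, central]
  · simp [sixParameterBracket_apply, sixParameterCocycle_apply, h]

theorem sixParameterBracket_P_P_self (σ : Bool) (m n : ℤ) :
    sixParameterBracket c d d0 k (generator (.P σ m)) (generator (.P σ n)) =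
      (k * (m : ℂ) * (if m + n = 0 then 1 else 0)) • generator .C := by
  obtain h | h := eq_or_ne (m + n) 0
  · have hn : (n : ℂ) = -m := by exact_mod_cast eq_neg_of_add_eq_zero_right h
    have central : -((n : ℂ) * k) = k * m := by
      rw [hn]; ring
    simp [sixParameterBracket_apply, sixParameterCocycle_apply, h, central]
  · simp [sixParameterBracket_apply, sixParameterCocycle_apply, h]

theorem sixParameterBracket_L_Q (σ : Bool) (m : ℤ) :
    sixParameterBracket c d d0 k (generator (.L σ m)) (generator .Q) =
      (Complex.I / 2) • generator (.P σ m)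
        + (sgn σ * d0 * (if m = 0 then 1 else 0)) • generator .C := by
  obtain rfl | h := eq_or_ne m 0
  · have central : -(Complex.I / 2 * (2 * Complex.I * sgn σ * d0)) = sgn σ * d0 := by
      linear_combination -sgn σ * d0 * Complex.I_sq
    simp [sixParameterBracket_apply, sixParameterCocycle_apply, central]
  · simp [sixParameterBracket_apply, sixParameterCocycle_apply, h]

theorem sixParameterBracket_P_Q (σ : Bool) (m : ℤ) :
    sixParameterBracket c d d0 k (generator (.P σ m)) (generator .Q) =
      (Complex.I / 2 * k * (if m = 0 then 1 else 0)) • generator .C := by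
  obtain rfl | h := eq_or_ne m 0
  · simp [sixParameterBracket_apply, sixParameterCocycle_apply]
  · simp [sixParameterBracket_apply, sixParameterCocycle_apply, h]

theorem sixParameterBracket_C (x : ExtendedCurrents) :
    sixParameterBracket c d d0 k x (generator .C) = 0 := by
  simp [sixParameterBracket_apply]

variable {σ τ : Bool}

theorem sixParameterBracket_L_L_of_ne (h : σ ≠ τ) (m n : ℤ) :
    sixParameterBracket c d d0 k (generator (.L σ m)) (generator (.L τ n)) = 0 := by
  simp [sixParameterBracket_apply, sixParameterCocycle_apply, mode_mul_mode_of_ne h]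

theorem sixParameterBracket_L_P_of_ne (h : σ ≠ τ) (m n : ℤ) :
    sixParameterBracket c d d0 k (generator (.L σ m)) (generator (.P τ n)) = 0 := by
  simp [sixParameterBracket_apply, sixParameterCocycle_apply, mode_mul_mode_of_ne h]

theorem sixParameterBracket_P_P_of_ne (h : σ ≠ τ) (m n : ℤ) :
    sixParameterBracket c d d0 k (generator (.P σ m)) (generator (.P τ n)) = 0 := by
  simp [sixParameterBracket_apply, sixParameterCocycle_apply, mode_mul_mode_of_ne h]

end Relations

section FreeBracket

variable (c d : Bool → ℂ) (d0 k : ℂ)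

theorem generator_repr_generator (a : BasisElem) : generator.repr (generator a) = e a :=
  generator.repr_self a

/-- The bracket `[x, y]` of the six-parameter extension on the free vector space, hence the factor
`-i` undoing the rescaling in `sixParameterBracket`. -/
noncomputable def freeBracket :
    (BasisElem →₀ ℂ) →ₗ[ℂ] (BasisElem →₀ ℂ) →ₗ[ℂ] (BasisElem →₀ ℂ) :=
  -Complex.I • ((sixParameterBracket c d d0 k).compl₁₂ generator.repr.symm.toLinearMap
    generator.repr.symm.toLinearMap).compr₂ generator.repr.toLinearMap

theorem isLieBracket_freeBracket : IsLieBracket (freeBracket c d d0 k) :=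
  ((isLieBracket_sixParameterBracket c d d0 k).conj generator.repr.symm).smul _

theorem freeBracket_e_e (a b : BasisElem) : freeBracket c d d0 k (e a) (e b) =
    -Complex.I • generator.repr (sixParameterBracket c d d0 k (generator a) (generator b)) := by
  simp [freeBracket, e]

theorem I_smul_freeBracket_e_e (a b : BasisElem) : Complex.I • freeBracket c d d0 k (e a) (e b) =
    generator.repr (sixParameterBracket c d d0 k (generator a) (generator b)) := by
  simp [freeBracket_e_e, smul_smul]

end FreeBracket

end AsymptoticSymmetry


/-- The six-parameter centrally extended algebra closes: for any complex numbers
`c⁺, c⁻, d⁺, d⁻, d₀, k` there is a bilinear bracket `B` on the free ℂ-vector space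
on `BasisElem` taking the prescribed values on basis vectors, which is alternating
and satisfies the Jacobi identity, i.e. it defines a Lie algebra structure. -/
theorem stmt_2 (c d : Bool → ℂ) (d0 k : ℂ) :
    ∃ B : (BasisElem →₀ ℂ) →ₗ[ℂ] (BasisElem →₀ ℂ) →ₗ[ℂ] (BasisElem →₀ ℂ),
      (∀ σ (m n : ℤ), Complex.I • B (e (.L σ m)) (e (.L σ n)) =
        ((m : ℂ) - n) • e (.L σ (m + n))
          + (c σ / 12 * (m : ℂ) ^ 3 * (if m + n = 0 then 1 else 0)) • e .C) ∧
      (∀ m n : ℤ, B (e (.L true m)) (e (.L false n)) = 0) ∧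
      (∀ σ (m n : ℤ), Complex.I • B (e (.L σ m)) (e (.P σ n)) =
        (-(n : ℂ)) • e (.P σ (m + n))
          + ((d σ * (m : ℂ) ^ 2 - sgn σ * Complex.I * d0 * m * (m + 2))
              * (if m + n = 0 then 1 else 0)) • e .C) ∧
      (∀ σ (m n : ℤ), B (e (.L σ m)) (e (.P (!σ) n)) = 0) ∧
      (∀ σ (m n : ℤ), Complex.I • B (e (.P σ m)) (e (.P σ n)) =
        (k * (m : ℂ) * (if m + n = 0 then 1 else 0)) • e .C) ∧
      (∀ m n : ℤ, B (e (.P true m)) (e (.P false n)) = 0) ∧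
      (∀ σ (m : ℤ), Complex.I • B (e (.L σ m)) (e .Q) =
        (Complex.I / 2) • e (.P σ m) + (sgn σ * d0 * (if m = 0 then 1 else 0)) • e .C) ∧
      (∀ σ (m : ℤ), Complex.I • B (e (.P σ m)) (e .Q) =
        (Complex.I / 2 * k * (if m = 0 then 1 else 0)) • e .C) ∧
      (∀ b : BasisElem, B (e b) (e .C) = 0) ∧
      (∀ x, B x x = 0) ∧
      (∀ x y z, B (B x y) z + B (B y z) x + B (B z x) y = 0) := by
  refine ⟨freeBracket c d d0 k, fun σ m n ↦ ?_, fun m n ↦ ?_, fun σ m n ↦ ?_, fun σ m n ↦ ?_,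
    fun σ m n ↦ ?_, fun m n ↦ ?_, fun σ m ↦ ?_, fun σ m ↦ ?_, fun b ↦ ?_,
    (isLieBracket_freeBracket c d d0 k).isAlt, (isLieBracket_freeBracket c d d0 k).jacobi⟩
  · simp only [I_smul_freeBracket_e_e, sixParameterBracket_L_L_self, map_add, map_smul,
      generator_repr_generator]
  · rw [freeBracket_e_e, sixParameterBracket_L_L_of_ne _ _ _ _ (by decide), map_zero, smul_zero]
  · simp only [I_smul_freeBracket_e_e, sixParameterBracket_L_P_self, map_add, map_smul,
      generator_repr_generator]
  · rw [freeBracket_e_e, sixParameterBracket_L_P_of_ne _ _ _ _ (by simp), map_zero, smul_zero]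
  · simp only [I_smul_freeBracket_e_e, sixParameterBracket_P_P_self, map_smul,
      generator_repr_generator]
  · rw [freeBracket_e_e, sixParameterBracket_P_P_of_ne _ _ _ _ (by decide), map_zero, smul_zero]
  · simp only [I_smul_freeBracket_e_e, sixParameterBracket_L_Q, map_add, map_smul,
      generator_repr_generator]
  · simp only [I_smul_freeBracket_e_e, sixParameterBracket_P_Q, map_smul, generator_repr_generator]
  · rw [freeBracket_e_e, sixParameterBracket_C, map_zero, smul_zero]
end

section
/- Second cohomology of the Witt algebra in cocycle form: Let K : ℤ×ℤ → ℂ satisfy K(m,n) = −K(n,m) for all m, n ∈ ℤ and the cocycle identity (m−n)K(m+n,p) + (n−p)K(n+p,m) + (p−m)K(p+m,n) = 0 for all m, n, p ∈ ℤ. Then there exist c ∈ ℂ and a function g : ℤ → ℂ such that K(m,n) = (c/12)(m³ − m)·δ_{m+n,0} + (m−n)·g(m+n) for all m, n ∈ ℤ. -/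
/-!
The cocycle identity with `p = 0` reads `(m + n) K(m, n) = (m - n) K(m + n, 0)`, so away from
`m + n = 0` the cocycle is the coboundary of `g(s) = K(s, 0) / s`. On the line `m + n = 0` the
identity for `(m, 1, -m - 1)` is a first-order recursion for the odd function `f(m) = K(m, -m)`.
Since the coefficient of `f(m + 1)` vanishes at `m = 1`, its odd solutions are determined by
`f(1)` and `f(2)`; they are the span of `m`, which is again a coboundary, and `m³ - m`.
-/

/-- A 2-cocycle of the Witt algebra over `𝕜` with values in the trivial module `V`, given by its
values `K m n` on the pairs of basis vectors `(L m, L n)`. -/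
structure IsWittCocycle_s4 (𝕜 : Type*) {V : Type*} [Field 𝕜] [AddCommGroup V] [Module 𝕜 V]
    (K : ℤ → ℤ → V) : Prop where
  antisymm : ∀ m n : ℤ, K m n = -K n m
  jacobi : ∀ m n p : ℤ,
    ((m : 𝕜) - n) • K (m + n) p + ((n : 𝕜) - p) • K (n + p) m + ((p : 𝕜) - m) • K (p + m) n = 0

namespace IsWittCocycle_s4

variable {𝕜 V : Type*} [Field 𝕜] [AddCommGroup V] [Module 𝕜 V] {K : ℤ → ℤ → V}

theorem add_smul_apply (hK : IsWittCocycle_s4 𝕜 K) (m n : ℤ) :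
    ((m : 𝕜) + n) • K m n = ((m : 𝕜) - n) • K (m + n) 0 := by
  have h := hK.jacobi m n 0
  rw [add_zero, zero_add, hK.antisymm n m, Int.cast_zero] at h
  linear_combination (norm := module) -h

theorem apply_eq_smul_of_add_ne_zero [CharZero 𝕜] (hK : IsWittCocycle_s4 𝕜 K) {m n : ℤ}
    (hmn : m + n ≠ 0) :
    K m n = ((m : 𝕜) - n) • ((m + n : ℤ) : 𝕜)⁻¹ • K (m + n) 0 := by
  have hmn' : ((m + n : ℤ) : 𝕜) ≠ 0 := Int.cast_ne_zero.mpr hmn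
  rw [smul_comm, eq_inv_smul_iff₀ hmn', Int.cast_add, hK.add_smul_apply]

theorem odd_apply_neg (hK : IsWittCocycle_s4 𝕜 K) : (fun m ↦ K m (-m)).Odd := fun m ↦ by
  simpa only [neg_neg] using hK.antisymm (-m) m

theorem sub_one_smul_apply_neg (hK : IsWittCocycle_s4 𝕜 K) (m : ℤ) :
    ((m : 𝕜) - 1) • K (m + 1) (-(m + 1)) =
      ((m : 𝕜) + 2) • K m (-m) - (2 * (m : 𝕜) + 1) • K 1 (-1) := by
  have h := hK.jacobi m 1 (-(m + 1))
  rw [show 1 + -(m + 1) = -m by ring, show -(m + 1) + m = -1 by ring, hK.antisymm (-m) m,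
    hK.antisymm (-1) 1] at h
  push_cast at h
  linear_combination (norm := module) h

end IsWittCocycle_s4

section Recursion

variable {𝕜 V : Type*} [Field 𝕜] [CharZero 𝕜] [AddCommGroup V] [Module 𝕜 V] {f : ℤ → V}

theorem eq_cubic_of_two_le_of_recursion
    (hrec : ∀ m : ℤ, ((m : 𝕜) - 1) • f (m + 1) = ((m : 𝕜) + 2) • f m - (2 * (m : 𝕜) + 1) • f 1)
    {m : ℤ} (hm : 2 ≤ m) :
    f m = (((m : 𝕜) ^ 3 - m) / 6) • (f 2 - (2 : 𝕜) • f 1) + (m : 𝕜) • f 1 := by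
  induction m, hm using Int.leInduction with
  | base =>
    push_cast
    module
  | succ m hm ih =>
    have hm' : (m : 𝕜) - 1 ≠ 0 := by
      rw [sub_ne_zero]
      exact_mod_cast (show m ≠ 1 by lia)
    apply smul_right_injective V hm'
    dsimp only
    rw [hrec, ih]
    push_cast
    module

theorem eq_cubic_of_odd_of_recursion (hodd : f.Odd)
    (hrec : ∀ m : ℤ, ((m : 𝕜) - 1) • f (m + 1) = ((m : 𝕜) + 2) • f m - (2 * (m : 𝕜) + 1) • f 1)
    (m : ℤ) :
    f m = (((m : 𝕜) ^ 3 - m) / 6) • (f 2 - (2 : 𝕜) • f 1) + (m : 𝕜) • f 1 := by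
  have hnonneg {k : ℤ} (hk : 0 ≤ k) :
      f k = (((k : 𝕜) ^ 3 - k) / 6) • (f 2 - (2 : 𝕜) • f 1) + (k : 𝕜) • f 1 := by
    obtain rfl | rfl | hk : k = 0 ∨ k = 1 ∨ 2 ≤ k := by lia
    · have hzero : (2 : 𝕜) • f 0 = 0 := by
        have h := hrec 0
        rw [Int.cast_zero, zero_add] at h
        linear_combination (norm := module) -h
      simpa using hzero
    · simp
    · exact eq_cubic_of_two_le_of_recursion hrec hk
  obtain hm | hm := le_total 0 m
  · exact hnonneg hm
  · rw [← neg_neg m, hodd, hnonneg (neg_nonneg.mpr hm)]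
    push_cast
    module

end Recursion

theorem stmt_4_general {𝕜 V : Type*} [Field 𝕜] [CharZero 𝕜] [AddCommGroup V] [Module 𝕜 V]
    {K : ℤ → ℤ → V} (hK : IsWittCocycle_s4 𝕜 K) :
    ∃ c : V, ∃ g : ℤ → V, ∀ m n : ℤ,
      K m n = (((m : 𝕜) ^ 3 - m) / 12 * (if m + n = 0 then 1 else 0)) • c
        + ((m : 𝕜) - n) • g (m + n) := by
  refine ⟨(2 : 𝕜) • (K 2 (-2) - (2 : 𝕜) • K 1 (-1)),
    fun s ↦ if s = 0 then (2 : 𝕜)⁻¹ • K 1 (-1) else (s : 𝕜)⁻¹ • K s 0, fun m n ↦ ?_⟩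
  by_cases hmn : m + n = 0
  · obtain rfl : n = -m := by lia
    simp only [hmn, if_true]
    have hcubic := eq_cubic_of_odd_of_recursion hK.odd_apply_neg hK.sub_one_smul_apply_neg m
    rw [hcubic]
    push_cast
    module
  · simpa only [hmn, if_false, mul_zero, zero_smul, zero_add] using
      hK.apply_eq_smul_of_add_ne_zero hmn

/-- Second cohomology of the Witt algebra in cocycle form: every antisymmetric
2-cocycle `K` is cohomologous to the standard Virasoro cocycle, i.e.
`K m n = (c/12)(m³ - m) δ_{m+n,0} + (m - n) g (m + n)` for some `c` and `g`. -/
theorem stmt_4 (K : ℤ → ℤ → ℂ)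
    (hanti : ∀ m n : ℤ, K m n = - K n m)
    (hcoc : ∀ m n p : ℤ,
      ((m : ℂ) - n) * K (m + n) p + ((n : ℂ) - p) * K (n + p) m
        + ((p : ℂ) - m) * K (p + m) n = 0) :
    ∃ c : ℂ, ∃ g : ℤ → ℂ, ∀ m n : ℤ,
      K m n = c / 12 * ((m : ℂ) ^ 3 - m) * (if m + n = 0 then 1 else 0)
        + ((m : ℂ) - n) * g (m + n) := by
  obtain ⟨c, g, h⟩ := stmt_4_general (𝕜 := ℂ) ⟨hanti, hcoc⟩
  exact ⟨c, g, fun m n ↦ (h m n).trans (by simp only [smul_eq_mul]; ring)⟩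
end

section
/- Classification of the mixed Virasoro–current central terms: Let V : ℤ×ℤ → ℂ and X : ℤ → ℂ satisfy, for all m, n, p ∈ ℤ: (i) (m−n)V(m+n,p) + p(V(m,n+p) − V(n,m+p)) = 0; (ii) (m−n)X(m+n) − (i/2)V(m,n) + (i/2)V(n,m) = 0; and (iii) V(0,n) = 0 for all n ≠ 0. Then there exist complex numbers d and d₀ such that V(m,n) = (d·m² − i·d₀·m(m+2))·δ_{m+n,0} for all m, n ∈ ℤ, and X(m) = d₀·δ_{m,0} for all m ∈ ℤ. -/
/-!
Taking `n = 0` in (i) shows that `(m + p) V(m, p) = p V(0, m + p)`, so the normalization (iii)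
confines `V` to the antidiagonal `m + p = 0`. There `f m = V(m, -m)` satisfies
`(m - n) f (m + n) = (m + n) (f m - f n)`. Both `m` and `m²` solve this equation, and a solution is
determined by `f 1` and `f 2`, because `n = 1` makes it a first-order recursion that degenerates
only at `m = ±1`. Hence `f m = a m + b m²`, and (ii) expresses the odd part `a` through `X 0`.
-/

/-- The Jacobi identity for `L_m`, `L_n`, `P_p`, as a condition on the central terms `V m n` of
`[L_m, P_n]`. -/
def IsMixedCocycle {R : Type*} [Ring R] (V : ℤ → ℤ → R) : Prop :=
  ∀ m n p : ℤ, ((m : R) - n) * V (m + n) p + (p : R) * (V m (n + p) - V n (m + p)) = 0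

/-- The restriction of the mixed cocycle condition to the antidiagonal, where `f m` stands for
`V m (-m)`. -/
def IsAntidiagonalCocycle {R : Type*} [Ring R] (f : ℤ → R) : Prop :=
  ∀ m n : ℤ, ((m : R) - n) * f (m + n) = ((m : R) + n) * (f m - f n)

/-- The Jacobi identity for `L_m`, `L_n`, `Q`, as a condition relating the central terms `X m` of
`[L_m, Q]` to the central terms `V m n` of `[L_m, P_n]`. Here `c / 2` is the coefficient of `P_m` in
`i[L_m, Q]`; the physical value is `c = i`. -/
def IsCompatible {K : Type*} [DivisionRing K] (c : K) (V : ℤ → ℤ → K) (X : ℤ → K) : Prop :=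
  ∀ m n : ℤ, ((m : K) - n) * X (m + n) - c / 2 * V m n + c / 2 * V n m = 0

namespace IsAntidiagonalCocycle

section CommRing

variable {R : Type*} [CommRing R]

theorem linear_add_quadratic (a b : R) :
    IsAntidiagonalCocycle fun m : ℤ => a * m + b * (m : R) ^ 2 := by
  intro m n
  push_cast
  ring

theorem sub {f g : ℤ → R} (hf : IsAntidiagonalCocycle f) (hg : IsAntidiagonalCocycle g) :
    IsAntidiagonalCocycle fun m => f m - g m := by
  intro m n
  linear_combination hf m n - hg m n

theorem sub_one_mul_apply_add_one {f : ℤ → R} (hf : IsAntidiagonalCocycle f) (h1 : f 1 = 0)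
    (m : ℤ) : ((m - 1 : ℤ) : R) * f (m + 1) = ((m + 1 : ℤ) : R) * f m := by
  simpa [h1] using hf m 1

theorem apply_neg_one {f : ℤ → R} (hf : IsAntidiagonalCocycle f) : f (-1) = f 2 - 3 * f 1 := by
  have h : 3 * f 1 = f 2 - f (-1) := by
    convert hf 2 (-1) using 1 <;> norm_num
  linear_combination h

end CommRing

section NoZeroDivisors

variable {R : Type*} [CommRing R] [NoZeroDivisors R] [CharZero R] {f : ℤ → R}

theorem apply_add_one_eq_zero (hf : IsAntidiagonalCocycle f) (h1 : f 1 = 0) {m : ℤ} (hm : m ≠ 1)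
    (hfm : f m = 0) : f (m + 1) = 0 := by
  have h := hf.sub_one_mul_apply_add_one h1 m
  rw [hfm, mul_zero] at h
  exact (mul_eq_zero.mp h).resolve_left (Int.cast_ne_zero.mpr (sub_ne_zero.mpr hm))

theorem apply_eq_zero_of_apply_add_one (hf : IsAntidiagonalCocycle f) (h1 : f 1 = 0) {m : ℤ}
    (hm : m ≠ -1) (hfm : f (m + 1) = 0) : f m = 0 := by
  have h := hf.sub_one_mul_apply_add_one h1 m
  rw [hfm, mul_zero] at h
  exact (mul_eq_zero.mp h.symm).resolve_left
    (Int.cast_ne_zero.mpr fun h' => hm (eq_neg_of_add_eq_zero_left h'))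

theorem eq_zero (hf : IsAntidiagonalCocycle f) (h1 : f 1 = 0) (h2 : f 2 = 0) (m : ℤ) :
    f m = 0 := by
  have h0 : f 0 = 0 := hf.apply_eq_zero_of_apply_add_one h1 (by decide) h1
  have h_neg_one : f (-1) = 0 := by rw [hf.apply_neg_one, h1, h2, mul_zero, sub_zero]
  have h_ge_two (k : ℤ) (hk : 2 ≤ k) : f k = 0 := by
    induction k, hk using Int.leInduction with
    | base => exact h2
    | succ k hk ih => exact hf.apply_add_one_eq_zero h1 (by lia) ih
  have h_le_neg_one (k : ℤ) (hk : k ≤ -1) : f k = 0 := by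
    induction k, hk using Int.leInductionDown with
    | base => exact h_neg_one
    | pred k hk ih => exact hf.apply_eq_zero_of_apply_add_one h1 (by lia) (by simpa using ih)
  obtain hm | rfl | rfl | hm : m ≤ -1 ∨ m = 0 ∨ m = 1 ∨ 2 ≤ m := by lia
  exacts [h_le_neg_one m hm, h0, h1, h_ge_two m hm]

end NoZeroDivisors

theorem exists_eq_linear_add_quadratic {K : Type*} [Field K] [CharZero K] {f : ℤ → K}
    (hf : IsAntidiagonalCocycle f) : ∃ a b : K, ∀ m : ℤ, f m = a * m + b * (m : K) ^ 2 := by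
  -- The coefficients interpolate `f` at `1` and `2`.
  refine ⟨2 * f 1 - f 2 / 2, f 2 / 2 - f 1, fun m => sub_eq_zero.mp ?_⟩
  refine (hf.sub (linear_add_quadratic _ _)).eq_zero ?_ ?_ m
  all_goals
    push_cast
    ring

end IsAntidiagonalCocycle

namespace IsMixedCocycle

variable {R : Type*} [CommRing R] {V : ℤ → ℤ → R}

theorem add_mul_apply (hV : IsMixedCocycle V) (m p : ℤ) :
    ((m + p : ℤ) : R) * V m p = p * V 0 (m + p) := by
  have h := hV m 0 p
  simp only [add_zero, zero_add, Int.cast_zero, sub_zero] at h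
  push_cast
  linear_combination h

theorem apply_eq_zero_of_add_ne_zero [NoZeroDivisors R] [CharZero R] (hV : IsMixedCocycle V)
    (hV0 : ∀ n : ℤ, n ≠ 0 → V 0 n = 0) {m p : ℤ} (hmp : m + p ≠ 0) : V m p = 0 := by
  have h := hV.add_mul_apply m p
  rw [hV0 _ hmp, mul_zero] at h
  exact (mul_eq_zero.mp h).resolve_left (Int.cast_ne_zero.mpr hmp)

theorem isAntidiagonalCocycle (hV : IsMixedCocycle V) :
    IsAntidiagonalCocycle fun m => V m (-m) := by
  intro m n
  have h := hV m n (-(m + n))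
  rw [show n + -(m + n) = -m by ring, show m + -(m + n) = -n by ring] at h
  push_cast at h
  linear_combination h

end IsMixedCocycle

namespace IsCompatible

variable {K : Type*} [Field K] [CharZero K] {c : K} {V : ℤ → ℤ → K} {X : ℤ → K}

theorem apply_eq_zero_of_ne_zero (hX : IsCompatible c V X)
    (hV : ∀ m n : ℤ, m + n ≠ 0 → V m n = 0) {m : ℤ} (hm : m ≠ 0) : X m = 0 := by
  have h := hX m 0
  rw [hV m 0 (by simpa using hm), hV 0 m (by simpa using hm)] at h
  simpa [hm] using h

theorem four_mul_apply_zero (hX : IsCompatible c V X) (m : ℤ) :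
    4 * (m : K) * X 0 = c * (V m (-m) - V (-m) m) := by
  have h := hX m (-m)
  rw [add_neg_cancel] at h
  push_cast at h
  linear_combination 2 * h

theorem linear_coeff_eq (hX : IsCompatible c V X) (hc : c ≠ 0) {a b : K}
    (hV : ∀ m : ℤ, V m (-m) = a * m + b * (m : K) ^ 2) : a = 2 * (c⁻¹ * X 0) := by
  have h := hX.four_mul_apply_zero 1
  have hV_neg : V (-1) 1 = -a + b := by simpa using hV (-1)
  rw [hV 1, hV_neg] at h
  push_cast at h
  field_simp
  linear_combination -h / 2

end IsCompatible

theorem stmt_5_general {K : Type*} [Field K] [CharZero K] {c : K} (hc : c ≠ 0)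
    {V : ℤ → ℤ → K} {X : ℤ → K} (hV : IsMixedCocycle V) (hX : IsCompatible c V X)
    (hV0 : ∀ n : ℤ, n ≠ 0 → V 0 n = 0) :
    ∃ d d0 : K,
      (∀ m n : ℤ, V m n = (d * (m : K) ^ 2 + c⁻¹ * d0 * m * (m + 2))
          * (if m + n = 0 then 1 else 0)) ∧
      (∀ m : ℤ, X m = d0 * (if m = 0 then 1 else 0)) := by
  have hV_off (m n : ℤ) (hmn : m + n ≠ 0) : V m n = 0 := hV.apply_eq_zero_of_add_ne_zero hV0 hmn
  obtain ⟨a, b, hV_anti⟩ := hV.isAntidiagonalCocycle.exists_eq_linear_add_quadratic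
  have ha : a = 2 * (c⁻¹ * X 0) := hX.linear_coeff_eq hc hV_anti
  refine ⟨b - c⁻¹ * X 0, X 0, fun m n => ?_, fun m => ?_⟩
  · split_ifs with hmn
    · obtain rfl : n = -m := eq_neg_of_add_eq_zero_right hmn
      linear_combination hV_anti m + (m : K) * ha
    · rw [hV_off m n hmn, mul_zero]
  · split_ifs with hm
    · rw [hm, mul_one]
    · rw [hX.apply_eq_zero_of_ne_zero hV_off hm, mul_zero]

/-- Classification of the mixed Virasoro–current central terms `V(m,n)` (in
`i[L_m, P_n] = -n P_{m+n} + V(m,n)`) and `X(m)` (in `i[L_m, Q] = (i/2) P_m + X(m)`)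
subject to the Jacobi constraints and the normalization `V 0 n = 0` for `n ≠ 0`. -/
theorem stmt_5 (V : ℤ → ℤ → ℂ) (X : ℤ → ℂ)
    (hi : ∀ m n p : ℤ,
      ((m : ℂ) - n) * V (m + n) p + (p : ℂ) * (V m (n + p) - V n (m + p)) = 0)
    (hii : ∀ m n : ℤ,
      ((m : ℂ) - n) * X (m + n) - Complex.I / 2 * V m n + Complex.I / 2 * V n m = 0)
    (hiii : ∀ n : ℤ, n ≠ 0 → V 0 n = 0) :
    ∃ d d0 : ℂ,
      (∀ m n : ℤ, V m n = (d * (m : ℂ) ^ 2 - Complex.I * d0 * m * (m + 2))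
          * (if m + n = 0 then 1 else 0)) ∧
      (∀ m : ℤ, X m = d0 * (if m = 0 then 1 else 0)) := by
  simpa only [Complex.inv_I, neg_mul, ← sub_eq_add_neg] using
    stmt_5_general Complex.I_ne_zero hi hii hiii
end

section
/- Classification of the current-algebra central terms: Let W : ℤ×ℤ → ℂ satisfy W(m,n) = −W(n,m) for all m, n ∈ ℤ, and let Y : ℤ → ℂ, such that for all m, n, p ∈ ℤ: (i) −n·W(m+n,p) + p·W(m+p,n) = 0 and (ii) −n·Y(m+n) − (i/2)·W(m,n) = 0. Then there exists k ∈ ℂ such that W(m,n) = k·m·δ_{m+n,0} for all m, n ∈ ℤ, and Y(m) = (i/2)·k·δ_{m,0} for all m ∈ ℤ. -/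
/-!
Constraint (ii), read as `c * W m n = -n * Y (m + n)` with `c = i / 2`, makes `W` a function of `Y`,
so antisymmetry of `W` becomes `(m + n) * Y (m + n) = 0`, and `Y` is supported at `0`. The value
there is read off from (ii) at `(1, -1)`: it is `c * W 1 (-1)`, so the level is `k = W 1 (-1)`.
-/

namespace CurrentAlgebra

variable {R : Type*} [CommRing R] {c : R} {W : ℤ → ℤ → R} {Y : ℤ → R}

lemma mul_W_eq_neg_mul_Y_add (hWY : ∀ m n : ℤ, -(n : R) * Y (m + n) - c * W m n = 0) (m n : ℤ) :
    c * W m n = -(n : R) * Y (m + n) :=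
  (sub_eq_zero.mp (hWY m n)).symm

lemma Y_zero_eq_mul_W_one_neg_one (hWY : ∀ m n : ℤ, -(n : R) * Y (m + n) - c * W m n = 0) :
    Y 0 = c * W 1 (-1) := by
  simp [mul_W_eq_neg_mul_Y_add hWY]

lemma intCast_mul_Y_eq_zero (hanti : ∀ m n : ℤ, W m n = -W n m)
    (hWY : ∀ m n : ℤ, -(n : R) * Y (m + n) - c * W m n = 0) (s : ℤ) :
    (s : R) * Y s = 0 := by
  have hW_zero_right : c * W s 0 = 0 := by simp [mul_W_eq_neg_mul_Y_add hWY]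
  have hW_zero_left : c * W 0 s = -(s : R) * Y s := by simp [mul_W_eq_neg_mul_Y_add hWY]
  calc (s : R) * Y s = -(c * W 0 s) := by rw [hW_zero_left]; ring
    _ = c * W s 0 := by rw [hanti s 0]; ring
    _ = 0 := hW_zero_right

variable [IsDomain R] [CharZero R]

lemma Y_eq_ite (hanti : ∀ m n : ℤ, W m n = -W n m)
    (hWY : ∀ m n : ℤ, -(n : R) * Y (m + n) - c * W m n = 0) (s : ℤ) :
    Y s = c * W 1 (-1) * (if s = 0 then 1 else 0) := by
  split_ifs with hs
  · rw [hs, mul_one, Y_zero_eq_mul_W_one_neg_one hWY]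
  · rw [mul_zero]
    exact (mul_eq_zero.mp (intCast_mul_Y_eq_zero hanti hWY s)).resolve_left
      (Int.cast_ne_zero.mpr hs)

lemma W_eq_ite (hc : c ≠ 0) (hanti : ∀ m n : ℤ, W m n = -W n m)
    (hWY : ∀ m n : ℤ, -(n : R) * Y (m + n) - c * W m n = 0) (m n : ℤ) :
    W m n = W 1 (-1) * (m : R) * (if m + n = 0 then 1 else 0) := by
  apply mul_left_cancel₀ hc
  rw [mul_W_eq_neg_mul_Y_add hWY, Y_eq_ite hanti hWY]
  split_ifs with hmn
  · have hm : (m : R) = -(n : R) := by rw [eq_neg_of_add_eq_zero_left hmn, Int.cast_neg]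
    rw [hm]
    ring
  · simp only [mul_zero]

end CurrentAlgebra

theorem stmt_6_general {R : Type*} [CommRing R] [IsDomain R] [CharZero R] {c : R} (hc : c ≠ 0)
    (W : ℤ → ℤ → R) (Y : ℤ → R)
    (hanti : ∀ m n : ℤ, W m n = -W n m)
    (hWY : ∀ m n : ℤ, -(n : R) * Y (m + n) - c * W m n = 0) :
    ∃ k : R,
      (∀ m n : ℤ, W m n = k * (m : R) * (if m + n = 0 then 1 else 0)) ∧
      (∀ m : ℤ, Y m = c * k * (if m = 0 then 1 else 0)) :=
  ⟨W 1 (-1), CurrentAlgebra.W_eq_ite hc hanti hWY, CurrentAlgebra.Y_eq_ite hanti hWY⟩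

/-- Classification of the current-algebra central terms `W(m,n)` (in
`i[P_m, P_n] = W(m,n)`) and `Y(m)` (in `i[P_m, Q] = Y(m)`) subject to the
Jacobi constraints coming from the Witt action. -/
theorem stmt_6 (W : ℤ → ℤ → ℂ) (Y : ℤ → ℂ)
    (hanti : ∀ m n : ℤ, W m n = - W n m)
    (hi : ∀ m n p : ℤ, -(n : ℂ) * W (m + n) p + (p : ℂ) * W (m + p) n = 0)
    (hii : ∀ m n : ℤ, -(n : ℂ) * Y (m + n) - Complex.I / 2 * W m n = 0) :
    ∃ k : ℂ,
      (∀ m n : ℤ, W m n = k * (m : ℂ) * (if m + n = 0 then 1 else 0)) ∧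
      (∀ m : ℤ, Y m = Complex.I / 2 * k * (if m = 0 then 1 else 0)) :=
  stmt_6_general (div_ne_zero Complex.I_ne_zero two_ne_zero) W Y hanti hii
end

section
/- Harmonicity is preserved by the modified bracket: Let f₁, f₂ : ℝ × ℝ → ℝ be smooth functions of (u, v) satisfying ∂²fⱼ/∂u∂v = 0 everywhere, and let g₁, g₂, h₁, h₂ : ℝ → ℝ be smooth. Define f̂(u, v) := g₁(u)·∂f₂/∂u(u,v) + h₁(v)·∂f₂/∂v(u,v) − g₂(u)·∂f₁/∂u(u,v) − h₂(v)·∂f₁/∂v(u,v). Then ∂²f̂/∂u∂v = 0 everywhere. -/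
/-!
A `C²` solution of `∂ᵥ∂ᵤf = 0` is a sum `f(u, v) = a(u) + b(v)` (d'Alembert), so a vector field
`g(u)∂ᵤ + h(v)∂ᵥ` sends it to `g(u)a'(u) + h(v)b'(v)`, which is again such a sum. The bracket is a
difference of two functions of this form, hence of this form itself, and its mixed derivative
vanishes.
-/

section NontriviallyNormedField

variable {𝕜 E F : Type*} [NontriviallyNormedField 𝕜] [NormedAddCommGroup E] [NormedSpace 𝕜 E]
  [NormedAddCommGroup F] [NormedSpace 𝕜 F]

theorem contDiff_deriv_fst {m n : WithTop ℕ∞} {f : 𝕜 → E → F}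
    (hf : ContDiff 𝕜 n (fun q : 𝕜 × E => f q.1 q.2)) (hmn : m + 1 ≤ n) :
    ContDiff 𝕜 m (fun q : 𝕜 × E => deriv (fun u => f u q.2) q.1) := by
  have hslices : ContDiff 𝕜 n (Function.uncurry fun (q : 𝕜 × E) u => f u q.2) :=
    hf.comp (contDiff_snd.prodMk (contDiff_snd.comp contDiff_fst))
  exact hslices.fderiv_apply contDiff_fst contDiff_const hmn

theorem hasDerivAt_mixed_deriv_add (p q : 𝕜 → F) (u v : 𝕜) :
    HasDerivAt (fun v' => deriv (fun u' => p u' + q v') u) 0 v := by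
  simpa only [deriv_add_const] using hasDerivAt_const v (deriv p u)

end NontriviallyNormedField

section RCLike

variable {𝕜 F : Type*} [RCLike 𝕜] [NormedAddCommGroup F] [NormedSpace 𝕜 F]

theorem eq_add_sub_of_mixed_deriv_eq_zero {f : 𝕜 → 𝕜 → F}
    (hu : ∀ v, Differentiable 𝕜 (fun u => f u v))
    (huv : ∀ u v, HasDerivAt (fun v' => deriv (fun u' => f u' v') u) 0 v) (u₀ v₀ u v : 𝕜) :
    f u v = f u v₀ + (f u₀ v - f u₀ v₀) := by
  have deriv_indep (x : 𝕜) : deriv (fun u' => f u' v) x = deriv (fun u' => f u' v₀) x :=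
    is_const_of_deriv_eq_zero (fun y => (huv x y).differentiableAt) (fun y => (huv x y).deriv) v v₀
  have deriv_sub_eq_zero (x : 𝕜) : deriv (fun u' => f u' v - f u' v₀) x = 0 := by
    rw [deriv_fun_sub (hu v x) (hu v₀ x), deriv_indep x, sub_self]
  have sub_eq : f u v - f u v₀ = f u₀ v - f u₀ v₀ :=
    is_const_of_deriv_eq_zero ((hu v).sub (hu v₀)) deriv_sub_eq_zero u u₀
  rw [← sub_eq, add_sub_cancel]

theorem exists_contDiff_eq_add_of_mixed_deriv_eq_zero {n : WithTop ℕ∞} (hn : 2 ≤ n)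
    {f : 𝕜 → 𝕜 → F} (hf : ContDiff 𝕜 n (fun q : 𝕜 × 𝕜 => f q.1 q.2))
    (hmix : ∀ u v, deriv (fun v' => deriv (fun u' => f u' v') u) v = 0) :
    ∃ a b : 𝕜 → F, ContDiff 𝕜 n a ∧ ContDiff 𝕜 n b ∧ ∀ u v, f u v = a u + b v := by
  have contDiff_left (v : 𝕜) : ContDiff 𝕜 n (fun u => f u v) :=
    hf.comp (contDiff_prodMk_left v)
  have contDiff_right (u : 𝕜) : ContDiff 𝕜 n (fun v => f u v) :=
    hf.comp (contDiff_prodMk_right u)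
  have differentiable_deriv (u : 𝕜) : Differentiable 𝕜 (fun v => deriv (fun u' => f u' v) u) :=
    ((contDiff_deriv_fst (m := 1) hf (by rwa [one_add_one_eq_two])).comp
      (contDiff_prodMk_right u)).differentiable one_ne_zero
  have hasDerivAt_mixed (u v : 𝕜) : HasDerivAt (fun v' => deriv (fun u' => f u' v') u) 0 v :=
    hmix u v ▸ (differentiable_deriv u v).hasDerivAt
  have n_ne_zero : n ≠ 0 := (two_pos.trans_le hn).ne'
  exact ⟨fun u => f u 0, fun v => f 0 v - f 0 0, contDiff_left 0,
    (contDiff_right 0).sub contDiff_const, eq_add_sub_of_mixed_deriv_eq_zero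
      (fun v => (contDiff_left v).differentiable n_ne_zero) hasDerivAt_mixed 0 0⟩

theorem exists_differentiable_smul_deriv_add_smul_deriv_eq_add {f : 𝕜 → 𝕜 → F}
    (hf : ContDiff 𝕜 2 (fun q : 𝕜 × 𝕜 => f q.1 q.2))
    (hmix : ∀ u v, deriv (fun v' => deriv (fun u' => f u' v') u) v = 0)
    {g : 𝕜 → 𝕜} (hg : Differentiable 𝕜 g) (h : 𝕜 → 𝕜) :
    ∃ p q : 𝕜 → F, Differentiable 𝕜 p ∧ ∀ u v,
      g u • deriv (fun u' => f u' v) u + h v • deriv (fun v' => f u v') v = p u + q v := by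
  obtain ⟨a, b, ha, -, hfab⟩ := exists_contDiff_eq_add_of_mixed_deriv_eq_zero le_rfl hf hmix
  refine ⟨fun u => g u • deriv a u, fun v => h v • deriv b v,
    hg.smul ha.differentiable_deriv_two, fun u v => ?_⟩
  simp only [hfab, deriv_add_const, deriv_const_add]

theorem stmt_11_general {f₁ f₂ : 𝕜 → 𝕜 → F}
    (hf₁ : ContDiff 𝕜 2 (fun q : 𝕜 × 𝕜 => f₁ q.1 q.2))
    (hf₂ : ContDiff 𝕜 2 (fun q : 𝕜 × 𝕜 => f₂ q.1 q.2))
    {g₁ g₂ : 𝕜 → 𝕜} (hg₁ : Differentiable 𝕜 g₁) (hg₂ : Differentiable 𝕜 g₂) (h₁ h₂ : 𝕜 → 𝕜)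
    (hmix₁ : ∀ u v, deriv (fun v' => deriv (fun u' => f₁ u' v') u) v = 0)
    (hmix₂ : ∀ u v, deriv (fun v' => deriv (fun u' => f₂ u' v') u) v = 0)
    {fhat : 𝕜 → 𝕜 → F}
    (hfhat : ∀ u v, fhat u v =
      g₁ u • deriv (fun u' => f₂ u' v) u + h₁ v • deriv (fun v' => f₂ u v') v
        - g₂ u • deriv (fun u' => f₁ u' v) u - h₂ v • deriv (fun v' => f₁ u v') v) :
    (∀ v, Differentiable 𝕜 (fun u => fhat u v)) ∧
      ∀ u v, HasDerivAt (fun v' => deriv (fun u' => fhat u' v') u) 0 v := by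
  obtain ⟨p₂, q₂, hp₂, hY₁f₂⟩ :=
    exists_differentiable_smul_deriv_add_smul_deriv_eq_add hf₂ hmix₂ hg₁ h₁
  obtain ⟨p₁, q₁, hp₁, hY₂f₁⟩ :=
    exists_differentiable_smul_deriv_add_smul_deriv_eq_add hf₁ hmix₁ hg₂ h₂
  have fhat_eq_add (u v : 𝕜) : fhat u v = (p₂ - p₁) u + (q₂ - q₁) v := by
    rw [hfhat, sub_sub, hY₁f₂, hY₂f₁, add_sub_add_comm, Pi.sub_apply, Pi.sub_apply]
  simp only [fhat_eq_add]
  exact ⟨fun v => (hp₂.sub hp₁).add_const _, hasDerivAt_mixed_deriv_add _ _⟩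

end RCLike

/-- Harmonicity is preserved by the modified bracket: if `f₁, f₂` are smooth
solutions of `∂²f/∂u∂v = 0` and `g₁, g₂, h₁, h₂` are smooth, then
`f̂(u,v) = g₁(u)∂_u f₂ + h₁(v)∂_v f₂ − g₂(u)∂_u f₁ − h₂(v)∂_v f₁`
again satisfies `∂²f̂/∂u∂v = 0`. -/
theorem stmt_11 (f₁ f₂ : ℝ → ℝ → ℝ)
    (hf₁ : ContDiff ℝ (⊤ : ℕ∞) (fun q : ℝ × ℝ => f₁ q.1 q.2))
    (hf₂ : ContDiff ℝ (⊤ : ℕ∞) (fun q : ℝ × ℝ => f₂ q.1 q.2))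
    (g₁ g₂ h₁ h₂ : ℝ → ℝ)
    (hg₁ : ContDiff ℝ (⊤ : ℕ∞) g₁) (hg₂ : ContDiff ℝ (⊤ : ℕ∞) g₂)
    (hh₁ : ContDiff ℝ (⊤ : ℕ∞) h₁) (hh₂ : ContDiff ℝ (⊤ : ℕ∞) h₂)
    (hmix₁ : ∀ u v : ℝ, deriv (fun v' => deriv (fun u' => f₁ u' v') u) v = 0)
    (hmix₂ : ∀ u v : ℝ, deriv (fun v' => deriv (fun u' => f₂ u' v') u) v = 0)
    (fhat : ℝ → ℝ → ℝ)
    (hfhat : ∀ u v : ℝ, fhat u v =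
      g₁ u * deriv (fun u' => f₂ u' v) u + h₁ v * deriv (fun v' => f₂ u v') v
        - g₂ u * deriv (fun u' => f₁ u' v) u - h₂ v * deriv (fun v' => f₁ u v') v) :
    ∀ u v : ℝ, deriv (fun v' => deriv (fun u' => fhat u' v') u) v = 0 := by
  intro u v
  exact ((stmt_11_general (contDiff_infty.1 hf₁ 2) (contDiff_infty.1 hf₂ 2)
    (hg₁.differentiable (by simp)) (hg₂.differentiable (by simp)) h₁ h₂ hmix₁ hmix₂ hfhat).2
    u v).deriv
end
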